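/- arXiv:2209.10532 — 4 statements merged into one kernel-verified Lean document; each statement's English description precedes it below -/
import Mathlib

section
/- There exists a universal constant c₀ > 0 with the following property. Let U ⊆ ℂ be a simply connected domain, 𝒲 a Whitney square decomposition of U, and Q₀, Q₁ ∈ 𝒲. For j ∈ ℕ let ℱ_j be the set of squares Q̃ ∈ 𝒲 such that some hyperbolic geodesic in U (parameterized by hyperbolic length) from cen(Q₀) to a point of Q₁ passes through Q̃ at some time t ∈ [j−1, j). Then |ℱ_j| ≤ c₀ for every j. -/
open Complex Set Metric MeasureTheory

noncomputable section

/-- The closed axis-parallel square with center `c` and side length `s`. -/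
def square (c : ℂ) (s : ℝ) : Set ℂ :=
  {z : ℂ | |z.re - c.re| ≤ s / 2 ∧ |z.im - c.im| ≤ s / 2}

/-- The (Euclidean) distance between two subsets of `ℂ`. -/
def sdist (A B : Set ℂ) : ℝ := sInf {d : ℝ | ∃ a ∈ A, ∃ b ∈ B, d = dist a b}

/-- A Whitney square decomposition of an open set `D ⊊ ℂ`: a family of closed dyadic
squares (recorded by their centers and side lengths) with pairwise disjoint interiors
covering `D`, such that `diam(Q) ≤ dist(Q, ∂D) < 4 diam(Q)` for each square `Q`. -/
structure IsWhitneyDecomp (D : Set ℂ) (W : Set (ℂ × ℝ)) : Prop where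
  dyadic : ∀ q ∈ W, ∃ n : ℤ, q.2 = (2:ℝ) ^ n
  cover : D = ⋃ q ∈ W, square q.1 q.2
  disjInt : ∀ q ∈ W, ∀ q' ∈ W, q ≠ q' →
    interior (square q.1 q.2) ∩ interior (square q'.1 q'.2) = ∅
  lower : ∀ q ∈ W, Metric.diam (square q.1 q.2) ≤ sdist (square q.1 q.2) Dᶜ
  upper : ∀ q ∈ W, sdist (square q.1 q.2) Dᶜ < 4 * Metric.diam (square q.1 q.2)

/-- The inverse hyperbolic tangent, `artanh x = ½ log((1+x)/(1-x))`; for `x ∈ [0,1)` it is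
the hyperbolic length of the segment `[0, x]` in the unit disk with density `1/(1-|z|²)`. -/
def artanh (x : ℝ) : ℝ := (1 / 2) * Real.log ((1 + x) / (1 - x))

/-! The squares of `W` met by geodesics during `[s, s + T]` are caught by one hyperbolic ball. If
`w` lies in the square with centre `c`, then `|w - c| ≤ dist(c, ∂U) / 2`, so the Schwarz–Pick lemma
gives `|φ w - φ c| ≤ 2 (1 - |φ w|)`, while with the density `1 / (1 - |z|²)` the quantities
`1 - tanh t`, `t` in the window, are comparable. Hence every geodesic point `ψ z` at a time `t` in
the window has `|z - tanh s · φ c| ≤ (e^{2T} + 2) (1 - tanh t)`, with one base point `tanh s · φ c`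
for the whole window.

To transport this to `U`, let `a ∈ ∂U` be nearest to `ψ p`. A branch `G` of `√((x - a) / (ψ p - a))`
with `G (ψ p) = 1` covers `ball 1 (1/4)`, hence omits `ball (-1) (1/4)`, so its Cayley transform is
bounded and the Schwarz lemma controls `ψ` on a hyperbolic ball of small radius (a weak form of the
Koebe distortion theorem). Boundedly many such steps join the base point to `z`, so `dist(·, ∂U)`
changes by a bounded factor, and the squares in question have comparable sizes and disjoint
interiors inside a disc of comparable radius. -/

open scoped ComplexConjugate

/-! ### The Schwarz–Pick lemma -/

lemma norm_sub_le_norm_one_sub_conj_mul {p q : ℂ} (hp : ‖p‖ ≤ 1) (hq : ‖q‖ ≤ 1) :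
    ‖q - p‖ ≤ ‖1 - conj p * q‖ := by
  have hp' : normSq p ≤ 1 := by rw [normSq_eq_norm_sq]; exact pow_le_one₀ (norm_nonneg p) hp
  have hq' : normSq q ≤ 1 := by rw [normSq_eq_norm_sq]; exact pow_le_one₀ (norm_nonneg q) hq
  have identity :
      ‖1 - conj p * q‖ ^ 2 - ‖q - p‖ ^ 2 = (1 - normSq p) * (1 - normSq q) := by
    simp only [Complex.sq_norm, normSq_apply, sub_re, sub_im, mul_re, mul_im, conj_re, conj_im,
      one_re, one_im]
    ring
  refine le_of_sq_le_sq ?_ (norm_nonneg _)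
  linarith [mul_nonneg (sub_nonneg.2 hp') (sub_nonneg.2 hq')]

lemma one_sub_conj_mul_ne_zero {p q : ℂ} (hp : ‖p‖ < 1) (hq : ‖q‖ < 1) : 1 - conj p * q ≠ 0 := by
  intro h
  have hmul : ‖p‖ * ‖q‖ = 1 := by
    rw [← Complex.norm_conj p, ← norm_mul, ← sub_eq_zero.1 h, norm_one]
  exact (mul_lt_one_of_nonneg_of_lt_one_left (norm_nonneg p) hp hq.le).ne hmul

lemma norm_sub_le_div_mul_norm_one_sub_conj_mul {f : ℂ → ℂ} {c z : ℂ} {R : ℝ}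
    (hf : DifferentiableOn ℂ f (ball c R)) (hmaps : MapsTo f (ball c R) (ball 0 1))
    (hz : z ∈ ball c R) : ‖f z - f c‖ ≤ dist z c / R * ‖1 - conj (f c) * f z‖ := by
  have hnorm : ∀ u ∈ ball c R, ‖f u‖ < 1 := fun u hu ↦ mem_ball_zero_iff.1 (hmaps hu)
  have hc : ‖f c‖ < 1 := hnorm c (mem_ball_self (dist_nonneg.trans_lt hz))
  have hden : ∀ u ∈ ball c R, 1 - conj (f c) * f u ≠ 0 := fun u hu ↦
    one_sub_conj_mul_ne_zero hc (hnorm u hu)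
  have hschwarz := dist_le_div_mul_dist_of_mapsTo_ball
    (f := fun u ↦ (f u - f c) / (1 - conj (f c) * f u)) (R₂ := 1)
    ((hf.sub_const _).div ((hf.const_mul _).const_sub 1) hden)
    (fun u hu ↦ by
      simpa using div_le_one_of_le₀
        (norm_sub_le_norm_one_sub_conj_mul hc.le (hnorm u hu).le) (norm_nonneg _)) hz
  simp only [sub_self, zero_div, dist_zero_right, norm_div] at hschwarz
  rwa [div_le_iff₀ (norm_pos_iff.2 (hden z hz)), one_div_mul_eq_div] at hschwarz

lemma norm_sub_le_two_mul_one_sub_norm {f : ℂ → ℂ} {c z : ℂ} {R : ℝ} (hR : 0 < R)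
    (hf : DifferentiableOn ℂ f (ball c R)) (hmaps : MapsTo f (ball c R) (ball 0 1))
    (hz : dist z c ≤ R / 2) : ‖f z - f c‖ ≤ 2 * (1 - ‖f z‖) := by
  have hzR : z ∈ ball c R := mem_ball.2 (by linarith)
  have hfz : ‖f z‖ < 1 := mem_ball_zero_iff.1 (hmaps hzR)
  have hden : ‖1 - conj (f c) * f z‖ ≤ (1 - ‖f z‖ ^ 2) + ‖f z - f c‖ := by
    have hsplit : 1 - conj (f c) * f z
        = ((1 - ‖f z‖ ^ 2 : ℝ) : ℂ) + conj (f z - f c) * f z := by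
      push_cast
      rw [map_sub, ← Complex.conj_mul']
      ring
    have hnonneg : 0 ≤ 1 - ‖f z‖ ^ 2 := by nlinarith [norm_nonneg (f z)]
    calc ‖1 - conj (f c) * f z‖
        ≤ (1 - ‖f z‖ ^ 2) + ‖f z - f c‖ * ‖f z‖ := by
          rw [hsplit]
          refine (norm_add_le _ _).trans_eq ?_
          rw [Complex.norm_of_nonneg hnonneg, norm_mul, Complex.norm_conj]
      _ ≤ (1 - ‖f z‖ ^ 2) + ‖f z - f c‖ := by
          gcongr
          exact mul_le_of_le_one_right (norm_nonneg _) hfz.le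
  have hhalf : dist z c / R ≤ 1 / 2 := by rw [div_le_iff₀ hR]; linarith
  have hpick : ‖f z - f c‖ ≤ 1 / 2 * ((1 - ‖f z‖ ^ 2) + ‖f z - f c‖) :=
    (norm_sub_le_div_mul_norm_one_sub_conj_mul hf hmaps hzR).trans (by gcongr)
  nlinarith [norm_nonneg (f z)]

/-! ### A weak Koebe distortion theorem -/

/-- A proper open set `U ⊂ ℂ` together with a Riemann map, given as mutually inverse holomorphic
maps `φ : U → 𝔻` and `ψ : 𝔻 → U`. -/
structure IsRiemannPair (U : Set ℂ) (φ ψ : ℂ → ℂ) : Prop where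
  isOpen : IsOpen U
  ne_univ : U ≠ univ
  differentiableOn : DifferentiableOn ℂ φ U
  differentiableOn_inv : DifferentiableOn ℂ ψ (ball 0 1)
  mapsTo : MapsTo φ U (ball 0 1)
  mapsTo_inv : MapsTo ψ (ball 0 1) U
  invOn : InvOn φ ψ (ball 0 1) U

lemma exists_exp_eq_on_ball {c : ℂ} {R : ℝ} {F : ℂ → ℂ} (hF : DifferentiableOn ℂ F (ball c R))
    (hF₀ : ∀ z ∈ ball c R, F z ≠ 0) :
    ∃ h : ℂ → ℂ, DifferentiableOn ℂ h (ball c R) ∧ ∀ z ∈ ball c R, exp (h z) = F z := by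
  have hlogDeriv : DifferentiableOn ℂ (fun z ↦ deriv F z / F z) (ball c R) :=
    (hF.deriv isOpen_ball).div hF hF₀
  obtain ⟨h, hc, hh⟩ := hlogDeriv.isExactOn_ball.with_val_at c (log (F c))
  refine ⟨h, fun z hz ↦ (hh z hz).differentiableAt.differentiableWithinAt, fun z hz ↦ ?_⟩
  have hcR : c ∈ ball c R := mem_ball_self (dist_nonneg.trans_lt hz)
  have hderiv : ∀ x ∈ ball c R, HasDerivAt (fun u ↦ F u * exp (-h u)) 0 x := fun x hx ↦ by
    have hFx := (hF.differentiableAt (isOpen_ball.mem_nhds hx)).hasDerivAt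
    refine (hFx.fun_mul (hh x hx).fun_neg.cexp).congr_deriv ?_
    field_simp [hF₀ x hx]
    ring
  have hconst : F z * exp (-h z) = F c * exp (-h c) :=
    isOpen_ball.is_const_of_deriv_eq_zero (convex_ball c R).isPreconnected
      (fun x hx ↦ (hderiv x hx).differentiableAt.differentiableWithinAt)
      (fun x hx ↦ (hderiv x hx).deriv) hz hcR
  rw [hc, exp_neg, exp_neg, exp_log (hF₀ c hcR), mul_inv_cancel₀ (hF₀ c hcR),
    mul_inv_eq_one₀ (exp_ne_zero _)] at hconst
  exact hconst.symm

lemma IsRiemannPair.exists_sqrt {U : Set ℂ} {φ ψ : ℂ → ℂ} (h : IsRiemannPair U φ ψ) {a x₀ : ℂ}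
    (ha : a ∉ U) (hx₀ : x₀ ∈ U) :
    ∃ G : ℂ → ℂ, DifferentiableOn ℂ G U ∧ G x₀ = 1 ∧ ∀ x ∈ U, G x ^ 2 = (x - a) / (x₀ - a) := by
  obtain ⟨L, hL, hexp⟩ := exists_exp_eq_on_ball (h.differentiableOn_inv.sub_const a)
    fun z hz ↦ sub_ne_zero.2 (ne_of_mem_of_not_mem (h.mapsTo_inv hz) ha)
  have hexp' : ∀ x ∈ U, exp (L (φ x)) = x - a := fun x hx ↦ by
    rw [hexp _ (h.mapsTo hx), h.invOn.2 hx]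
  refine ⟨fun x ↦ exp ((L (φ x) - L (φ x₀)) / 2),
    (((hL.comp h.differentiableOn h.mapsTo).sub_const _).div_const 2).cexp, by simp,
    fun x hx ↦ ?_⟩
  rw [← exp_nat_mul, Nat.cast_ofNat, mul_div_cancel₀ _ two_ne_zero, exp_sub, hexp' x hx,
    hexp' x₀ hx₀]

lemma sqrt_add_mul_sq_eq {U : Set ℂ} {G : ℂ → ℂ} {a x₀ : ℂ} (hball : ball x₀ (dist x₀ a) ⊆ U)
    (hG : ContinuousOn G U) (hG₁ : G x₀ = 1) (hsq : ∀ x ∈ U, G x ^ 2 = (x - a) / (x₀ - a))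
    (ha : x₀ ≠ a) {v : ℂ} (hv : v ∈ ball (1 : ℂ) (1 / 4)) : G (a + (x₀ - a) * v ^ 2) = v := by
  have hc : x₀ - a ≠ 0 := sub_ne_zero.2 ha
  have hmaps : MapsTo (fun v ↦ a + (x₀ - a) * v ^ 2) (ball (1 : ℂ) (1 / 4)) U := fun v hv ↦ by
    rw [mem_ball, dist_eq] at hv
    have hfactor : a + (x₀ - a) * v ^ 2 - x₀ = (x₀ - a) * ((v - 1) * (2 + (v - 1))) := by ring
    have hsum : ‖2 + (v - 1)‖ ≤ 2 + 1 / 4 := by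
      refine (norm_add_le _ _).trans ?_
      rw [Complex.norm_ofNat]
      gcongr
    refine hball ?_
    rw [mem_ball, dist_eq, dist_eq, hfactor, norm_mul, norm_mul]
    refine mul_lt_of_lt_one_right (norm_pos_iff.2 hc) ?_
    calc ‖v - 1‖ * ‖2 + (v - 1)‖ ≤ 1 / 4 * (2 + 1 / 4) := by gcongr
      _ < 1 := by norm_num
  refine (convex_ball (1 : ℂ) (1 / 4)).isPreconnected.eq_of_sq_eq
    (hG.comp (by fun_prop) hmaps) continuousOn_id (fun u hu ↦ ?_) (fun {u} hu hu₀ ↦ ?_)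
    (mem_ball_self (by norm_num)) (by simp [hG₁]) hv
  · simp only [Pi.pow_apply, Function.comp_apply, id, hsq _ (hmaps hu)]
    field_simp
    ring
  · rw [show u = 0 from hu₀, mem_ball, dist_eq] at hu
    norm_num at hu

-- `G` and `-G` have disjoint images away from `0`, and `G` covers `ball 1 (1/4)`.
lemma one_fourth_le_norm_one_add_sqrt {U : Set ℂ} {G : ℂ → ℂ} {a x₀ x : ℂ}
    (hball : ball x₀ (dist x₀ a) ⊆ U) (hG : ContinuousOn G U) (hG₁ : G x₀ = 1)
    (hsq : ∀ x ∈ U, G x ^ 2 = (x - a) / (x₀ - a)) (ha : x₀ ≠ a) (hx : x ∈ U) :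
    1 / 4 ≤ ‖1 + G x‖ := by
  by_contra! hlt
  have hv : -G x ∈ ball (1 : ℂ) (1 / 4) := by
    rwa [mem_ball, dist_eq, ← norm_neg, neg_sub, sub_neg_eq_add]
  have hneg := sqrt_add_mul_sq_eq hball hG hG₁ hsq ha hv
  rw [neg_sq, hsq x hx, mul_div_cancel₀ _ (sub_ne_zero.2 ha), add_sub_cancel] at hneg
  rw [self_eq_neg.1 hneg, add_zero, norm_one] at hlt
  norm_num at hlt

lemma norm_cayley_le_nine {g : ℂ} (hg : 1 / 4 ≤ ‖1 + g‖) : ‖(1 - g) / (1 + g)‖ ≤ 9 := by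
  have hne : 1 + g ≠ 0 := norm_pos_iff.1 (lt_of_lt_of_le (by norm_num) hg)
  have hsplit : (1 - g) / (1 + g) = 2 / (1 + g) - 1 := by field_simp; ring
  calc ‖(1 - g) / (1 + g)‖ ≤ 2 / ‖1 + g‖ + 1 := by
        simpa [hsplit] using norm_sub_le (2 / (1 + g)) 1
    _ ≤ 2 / (1 / 4) + 1 := by gcongr
    _ = 9 := by norm_num

-- In terms of `m = (1 - g) / (1 + g)`, `(1 - g ^ 2) / 4` is the Koebe function `m / (1 + m) ^ 2`.
lemma norm_sq_sub_one_le_of_norm_cayley_le {g : ℂ} (hg : 1 + g ≠ 0)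
    (hm : ‖(1 - g) / (1 + g)‖ ≤ 1 / 10) : ‖g ^ 2 - 1‖ ≤ 1 / 2 := by
  set m := (1 - g) / (1 + g) with hm_def
  have hone_add : 1 + m = 2 / (1 + g) := by rw [hm_def]; field_simp; ring
  have hkoebe : g ^ 2 - 1 = -4 * m / (1 + m) ^ 2 := by
    rw [hone_add, hm_def]; field_simp; ring
  have hlower : 9 / 10 ≤ ‖1 + m‖ := by
    have := norm_sub_le_norm_add 1 m
    rw [norm_one] at this
    linarith
  calc ‖g ^ 2 - 1‖ = 4 * ‖m‖ / ‖1 + m‖ ^ 2 := by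
        rw [hkoebe, norm_div, norm_mul, norm_neg, norm_pow, Complex.norm_ofNat]
    _ ≤ 4 * (1 / 10) / (9 / 10) ^ 2 := by gcongr
    _ ≤ 1 / 2 := by norm_num

theorem IsRiemannPair.dist_le_infDist_div_two {U : Set ℂ} {φ ψ : ℂ → ℂ}
    (h : IsRiemannPair U φ ψ) {p q : ℂ} (hp : ‖p‖ < 1) (hq : dist q p ≤ (1 - ‖p‖) / 90) :
    dist (ψ q) (ψ p) ≤ infDist (ψ p) Uᶜ / 2 := by
  obtain ⟨a, ha, hdist⟩ :=
    h.isOpen.isClosed_compl.exists_infDist_eq_dist (nonempty_compl.2 h.ne_univ) (ψ p)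
  have hpU : ψ p ∈ U := h.mapsTo_inv (mem_ball_zero_iff.2 hp)
  have hpa : ψ p ≠ a := ne_of_mem_of_not_mem hpU ha
  obtain ⟨G, hG, hG₁, hsq⟩ := h.exists_sqrt ha hpU
  have hsub : ball p (1 - ‖p‖) ⊆ ball 0 1 := ball_subset_ball' (by simp)
  have hmapsU : MapsTo ψ (ball p (1 - ‖p‖)) U := h.mapsTo_inv.mono_left hsub
  have hqp : q ∈ ball p (1 - ‖p‖) := mem_ball.2 (by linarith)
  have homit : ∀ x ∈ U, 1 / 4 ≤ ‖1 + G x‖ := fun x ↦ one_fourth_le_norm_one_add_sqrt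
    (hdist ▸ ball_infDist_compl_subset) hG.continuousOn hG₁ hsq hpa
  have hne : ∀ x ∈ U, 1 + G x ≠ 0 := fun x hx ↦
    norm_pos_iff.1 (lt_of_lt_of_le (by norm_num) (homit x hx))
  have hGψ := hG.comp (h.differentiableOn_inv.mono hsub) hmapsU
  have hschwarz := dist_le_div_mul_dist_of_mapsTo_ball
    (f := fun z ↦ (1 - G (ψ z)) / (1 + G (ψ z))) (R₂ := 9)
    ((hGψ.const_sub 1).div (hGψ.const_add 1) fun z hz ↦ hne _ (hmapsU hz))
    (fun z hz ↦ by simpa [hG₁] using norm_cayley_le_nine (homit _ (hmapsU hz))) hqp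
  have hsmall : ‖(1 - G (ψ q)) / (1 + G (ψ q))‖ ≤ 1 / 10 := by
    simp only [hG₁, sub_self, zero_div, dist_zero_right] at hschwarz
    calc _ ≤ 9 / (1 - ‖p‖) * dist q p := hschwarz
      _ ≤ 9 / (1 - ‖p‖) * ((1 - ‖p‖) / 90) := by have := sub_pos.2 hp; gcongr
      _ = 1 / 10 := by have := (sub_pos.2 hp).ne'; field_simp; norm_num
  have hdiff : ψ q - ψ p = (ψ p - a) * (G (ψ q) ^ 2 - 1) := by
    rw [hsq _ (hmapsU hqp), mul_sub_one, mul_div_cancel₀ _ (sub_ne_zero.2 hpa)]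
    ring
  rw [hdist, dist_eq, hdiff, norm_mul, ← dist_eq, div_eq_mul_one_div]
  gcongr
  exact norm_sq_sub_one_le_of_norm_cayley_le (hne _ (hmapsU hqp)) hsmall

/-! ### Chains and Whitney balls -/

/-- The points whose distance to `b` is controlled by the distance from `b` to `S`, and whose own
distance to `S` is not much smaller. With `S = Uᶜ` it is a substitute for a hyperbolic ball of `U`
about `b`, of radius determined by `C`. -/
def whitneyBall {X : Type*} [PseudoMetricSpace X] (S : Set X) (b : X) (C : ℝ) : Set X :=
  {x | dist x b ≤ C * infDist b S ∧ infDist b S ≤ C * infDist x S}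

lemma mem_whitneyBall_of_chain {X : Type*} [PseudoMetricSpace X] {S : Set X} {x : ℕ → X} {n : ℕ}
    (hx : ∀ i < n, dist (x (i + 1)) (x i) ≤ infDist (x i) S / 2) :
    x n ∈ whitneyBall S (x 0) (2 ^ n) := by
  induction n with
  | zero => simp [whitneyBall, infDist_nonneg]
  | succ n ih =>
    obtain ⟨hdist, hinf⟩ := ih fun i hi ↦ hx i (by lia)
    have hstep := hx n n.lt_succ_self
    have hone : infDist (x 0) S ≤ 2 ^ n * infDist (x 0) S :=
      le_mul_of_one_le_left infDist_nonneg (one_le_pow₀ one_le_two)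
    constructor
    · have hn : infDist (x n) S ≤ infDist (x 0) S + dist (x n) (x 0) :=
        infDist_le_infDist_add_dist
      rw [pow_succ]
      linarith [dist_triangle (x (n + 1)) (x n) (x 0)]
    · have hhalf : infDist (x n) S ≤ infDist (x (n + 1)) S + dist (x n) (x (n + 1)) :=
        infDist_le_infDist_add_dist
      rw [dist_comm] at hhalf
      calc infDist (x 0) S ≤ 2 ^ n * infDist (x n) S := hinf
        _ ≤ 2 ^ n * (2 * infDist (x (n + 1)) S) := by gcongr; linarith
        _ = 2 ^ (n + 1) * infDist (x (n + 1)) S := by ring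

lemma IsRiemannPair.mem_whitneyBall {U : Set ℂ} {φ ψ : ℂ → ℂ} (h : IsRiemannPair U φ ψ) {p q : ℂ}
    {ρ K : ℝ} {n : ℕ} (hK : 0 < K) (hn : 90 * K ≤ n) (hρ : ρ < 1) (hp : ‖p‖ ≤ ρ) (hq : ‖q‖ ≤ ρ)
    (hpq : dist p q ≤ K * (1 - ρ)) : ψ q ∈ whitneyBall Uᶜ (ψ p) (2 ^ n) := by
  have hn₀ : (0 : ℝ) < n := lt_of_lt_of_le (by positivity) hn
  let z : ℕ → ℂ := fun i ↦ AffineMap.lineMap p q ((i : ℝ) / n)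
  have hz₀ : z 0 = p := by simp [z]
  have hzn : z n = q := by simp [z, div_self hn₀.ne']
  have hchain : ∀ i < n, dist (ψ (z (i + 1))) (ψ (z i)) ≤ infDist (ψ (z i)) Uᶜ / 2 := by
    intro i hi
    have hzi : ‖z i‖ ≤ ρ := by
      rw [← mem_closedBall_zero_iff] at hp hq ⊢
      exact (convex_closedBall 0 ρ).lineMap_mem hp hq
        ⟨by positivity, div_le_one_of_le₀ (Nat.cast_le.2 hi.le) hn₀.le⟩
    have hstep : dist (z (i + 1)) (z i) = dist p q / n := by
      rw [dist_lineMap_lineMap, Real.dist_eq, ← sub_div, Nat.cast_succ, add_sub_cancel_left,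
        abs_of_pos (by positivity), one_div_mul_eq_div]
    refine h.dist_le_infDist_div_two (hzi.trans_lt hρ) ?_
    rw [hstep, div_le_div_iff₀ hn₀ (by norm_num)]
    calc dist p q * 90 ≤ 90 * K * (1 - ρ) := by linarith
      _ ≤ n * (1 - ‖z i‖) := by
          have := sub_nonneg.2 hρ.le
          gcongr
      _ = (1 - ‖z i‖) * n := mul_comm _ _
  simpa only [Function.comp_apply, hz₀, hzn] using mem_whitneyBall_of_chain (x := ψ ∘ z) hchain

/-! ### Hyperbolic geodesics from the base point -/

lemma tanh_le_tanh_iff {s t : ℝ} : Real.tanh s ≤ Real.tanh t ↔ s ≤ t := by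
  have hmem (u : ℝ) : Real.tanh u ∈ Ioo (-1) 1 := ⟨Real.neg_one_lt_tanh u, Real.tanh_lt_one u⟩
  rw [← Real.artanh_le_artanh_iff (hmem s) (hmem t), Real.artanh_tanh, Real.artanh_tanh]

lemma artanh_eq_real_artanh {x : ℝ} (hx : x ∈ Icc (-1) 1) : artanh x = Real.artanh x :=
  (Real.artanh_eq_half_log hx).symm

lemma tanh_le_of_le_artanh {t x : ℝ} (hx : x ∈ Ioo (-1) 1) (h : t ≤ artanh x) :
    Real.tanh t ≤ x := by
  rwa [artanh_eq_real_artanh (Ioo_subset_Icc_self hx), ← tanh_le_tanh_iff,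
    Real.tanh_artanh hx] at h

lemma one_sub_tanh (t : ℝ) : 1 - Real.tanh t = 2 / (Real.exp (2 * t) + 1) := by
  rw [Real.tanh_eq, two_mul, Real.exp_add, Real.exp_neg]
  field_simp
  ring

lemma one_sub_tanh_le_exp_mul {s t T : ℝ} (hT : 0 ≤ T) (h : t ≤ s + T) :
    1 - Real.tanh s ≤ Real.exp (2 * T) * (1 - Real.tanh t) := by
  have hexp : Real.exp (2 * t) ≤ Real.exp (2 * T) * Real.exp (2 * s) := by
    rw [← Real.exp_add]
    exact Real.exp_le_exp.2 (by linarith)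
  have hone : 1 ≤ Real.exp (2 * T) := Real.one_le_exp (by positivity)
  rw [one_sub_tanh, one_sub_tanh, ← mul_div_assoc, div_le_div_iff₀ (by positivity) (by positivity)]
  linarith

lemma norm_div_norm_mul_sub_le {p q : ℂ} {r τ A : ℝ} (hA : 0 ≤ A) (hr : 0 ≤ r) (hrτ : r ≤ τ)
    (hτq : τ ≤ ‖q‖) (hq : ‖q‖ ≤ 1) (hqp : ‖q - p‖ ≤ A * (1 - ‖q‖)) :
    ‖((τ / ‖q‖ : ℝ) : ℂ) * q - r * p‖ ≤ (1 - r) + A * (1 - τ) := by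
  have hradial : ‖((τ / ‖q‖ - r : ℝ) : ℂ) * q‖ = τ - r * ‖q‖ := by
    have hrq : r * ‖q‖ ≤ τ := (mul_le_of_le_one_right hr hq).trans hrτ
    rcases eq_or_ne q 0 with rfl | hq₀
    · have : τ = 0 := le_antisymm (by simpa using hτq) (hr.trans hrτ)
      simp [this]
    · rw [norm_mul, norm_real, Real.norm_eq_abs, ← abs_norm q, ← abs_mul, abs_norm, sub_mul,
        div_mul_cancel₀ _ (norm_ne_zero_iff.2 hq₀), abs_of_nonneg (sub_nonneg.2 hrq)]
  calc ‖((τ / ‖q‖ : ℝ) : ℂ) * q - r * p‖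
      = ‖((τ / ‖q‖ - r : ℝ) : ℂ) * q + r * (q - p)‖ := by push_cast; congr 1; ring
    _ ≤ (τ - r * ‖q‖) + r * ‖q - p‖ := by
        refine (norm_add_le _ _).trans_eq ?_
        rw [hradial, norm_mul, Complex.norm_of_nonneg hr]
    _ ≤ (1 - r) + A * (1 - τ) := by
        have hτ : r * (1 - ‖q‖) ≤ 1 - ‖q‖ :=
          mul_le_of_le_one_left (sub_nonneg.2 hq) (hrτ.trans (hτq.trans hq))
        have hscaled : r * ‖q - p‖ ≤ ‖q - p‖ :=
          mul_le_of_le_one_left (norm_nonneg _) (hrτ.trans (hτq.trans hq))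
        have hAτ : A * (1 - ‖q‖) ≤ A * (1 - τ) := by gcongr
        linarith

lemma infDist_compl_pos {X : Type*} [PseudoMetricSpace X] {U : Set X} (hU : IsOpen U)
    (hne : U ≠ univ) {x : X} (hx : x ∈ U) : 0 < infDist x Uᶜ :=
  (hU.isClosed_compl.notMem_iff_infDist_pos (nonempty_compl.2 hne)).1 (notMem_compl_iff.2 hx)

lemma norm_tanh_mul_lt_one {z : ℂ} (hz : ‖z‖ ≤ 1) (s : ℝ) : ‖(Real.tanh s : ℂ) * z‖ < 1 := by
  rw [norm_mul, norm_real]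
  exact mul_lt_one_of_nonneg_of_lt_one_left (norm_nonneg _) (Real.abs_tanh_lt_one s) hz

theorem IsRiemannPair.geodesic_mem_whitneyBall {U : Set ℂ} {φ ψ : ℂ → ℂ} (h : IsRiemannPair U φ ψ)
    {c w : ℂ} {s t T : ℝ} {n : ℕ} (hn : 90 * (Real.exp (2 * T) + 2) ≤ n) (hc : c ∈ U)
    (hw : dist w c ≤ infDist c Uᶜ / 2) (hs : 0 ≤ s) (hst : s ≤ t) (htT : t ≤ s + T)
    (htw : t ≤ artanh ‖φ w‖) :
    ψ ((Real.tanh t / ‖φ w‖ : ℝ) * φ w) ∈ whitneyBall Uᶜ (ψ (Real.tanh s * φ c)) (2 ^ n) := by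
  have hd : 0 < infDist c Uᶜ := infDist_compl_pos h.isOpen h.ne_univ hc
  have hball : ball c (infDist c Uᶜ) ⊆ U := ball_infDist_compl_subset
  have hφw : ‖φ w‖ < 1 :=
    mem_ball_zero_iff.1 (h.mapsTo (hball (mem_ball.2 (hw.trans_lt (half_lt_self hd)))))
  have hpick : ‖φ w - φ c‖ ≤ 2 * (1 - ‖φ w‖) :=
    norm_sub_le_two_mul_one_sub_norm hd (h.differentiableOn.mono hball)
      (h.mapsTo.mono_left hball) hw
  have hs₀ : 0 ≤ Real.tanh s := by rwa [← Real.tanh_zero, tanh_le_tanh_iff]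
  have hst' : Real.tanh s ≤ Real.tanh t := tanh_le_tanh_iff.2 hst
  have htw' : Real.tanh t ≤ ‖φ w‖ :=
    tanh_le_of_le_artanh ⟨neg_one_lt_zero.trans_le (norm_nonneg _), hφw⟩ htw
  refine h.mem_whitneyBall (by positivity) hn (Real.tanh_lt_one t) ?_ ?_ ?_
  · rw [norm_mul, Complex.norm_of_nonneg hs₀]
    exact (mul_le_of_le_one_right hs₀ (mem_ball_zero_iff.1 (h.mapsTo hc)).le).trans hst'
  · rw [norm_mul, Complex.norm_of_nonneg (div_nonneg (hs₀.trans hst') (norm_nonneg _))]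
    exact mul_le_of_le_div₀ (hs₀.trans hst') (norm_nonneg _) le_rfl
  · rw [dist_comm, dist_eq]
    calc _ ≤ (1 - Real.tanh s) + 2 * (1 - Real.tanh t) :=
          norm_div_norm_mul_sub_le zero_le_two hs₀ hst' htw' hφw.le hpick
      _ ≤ Real.exp (2 * T) * (1 - Real.tanh t) + 2 * (1 - Real.tanh t) := by
          gcongr
          exact one_sub_tanh_le_exp_mul (by linarith) htT
      _ = (Real.exp (2 * T) + 2) * (1 - Real.tanh t) := by ring

/-! ### Whitney squares -/

lemma square_eq_reProdIm (c : ℂ) (s : ℝ) :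
    square c s = closedBall c.re (s / 2) ×ℂ closedBall c.im (s / 2) := rfl

lemma isBounded_square (c : ℂ) (s : ℝ) : Bornology.IsBounded (square c s) := by
  rw [square_eq_reProdIm]
  exact isBounded_closedBall.reProdIm isBounded_closedBall

lemma dist_center_le {c z : ℂ} {s : ℝ} (hz : z ∈ square c s) : dist z c ≤ s := by
  rw [dist_eq]
  refine (norm_le_abs_re_add_abs_im _).trans ?_
  rw [sub_re, sub_im]
  linarith [hz.1, hz.2]

lemma diam_square_le (c : ℂ) {s : ℝ} (hs : 0 ≤ s) : diam (square c s) ≤ 2 * s :=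
  (diam_mono (fun _ hz ↦ mem_closedBall.2 (dist_center_le hz)) isBounded_closedBall).trans
    (diam_closedBall hs)

lemma two_mul_dist_center_le_diam {c z : ℂ} {s : ℝ} (hz : z ∈ square c s) :
    2 * dist z c ≤ diam (square c s) := by
  have hreflect : 2 * c - z ∈ square c s := by
    obtain ⟨hre, him⟩ := hz
    rw [abs_sub_comm] at hre him
    constructor
    · convert hre using 2; simp; ring
    · convert him using 2; simp; ring
  calc 2 * dist z c = dist z (2 * c - z) := by
        rw [dist_eq, dist_eq, show z - (2 * c - z) = 2 * (z - c) by ring, norm_mul,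
          Complex.norm_ofNat]
    _ ≤ diam (square c s) := dist_le_diam_of_mem (isBounded_square c s) hz hreflect

lemma not_disjoint_interior_square {c c' : ℂ} {s s' : ℝ} (hre : |c.re - c'.re| < min s s')
    (him : |c.im - c'.im| < min s s') :
    ¬ Disjoint (interior (square c s)) (interior (square c' s')) := by
  simp only [lt_min_iff, abs_lt] at hre him
  rw [not_disjoint_iff]
  refine ⟨⟨(c.re + c'.re) / 2, (c.im + c'.im) / 2⟩, ?_⟩
  simp only [square_eq_reProdIm, interior_reProdIm, Real.closedBall_eq_Icc, interior_Icc,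
    mem_reProdIm, mem_Ioo]
  refine ⟨⟨⟨?_, ?_⟩, ?_, ?_⟩, ⟨?_, ?_⟩, ?_, ?_⟩ <;> linarith

lemma sdist_le_infDist {A B : Set ℂ} {x : ℂ} (hx : x ∈ A) : sdist A B ≤ infDist x B := by
  rcases B.eq_empty_or_nonempty with rfl | hB
  · simp [sdist]
  refine (le_infDist hB).2 fun y hy ↦ csInf_le ⟨0, ?_⟩ ⟨x, hx, y, hy, rfl⟩
  rintro _ ⟨a, -, b, -, rfl⟩
  exact dist_nonneg

lemma infDist_le_diam_add_sdist {A B : Set ℂ} {x : ℂ} (hA : Bornology.IsBounded A) (hx : x ∈ A) :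
    infDist x B ≤ diam A + sdist A B := by
  rcases B.eq_empty_or_nonempty with rfl | ⟨y, hy⟩
  · simp [sdist, diam_nonneg]
  rw [← sub_le_iff_le_add']
  refine le_csInf ⟨_, x, hx, y, hy, rfl⟩ ?_
  rintro _ ⟨a, ha, b, hb, rfl⟩
  linarith [infDist_le_dist_of_mem (x := x) hb, dist_triangle x a b, dist_le_diam_of_mem hA hx ha]

namespace IsWhitneyDecomp

variable {U : Set ℂ} {W : Set (ℂ × ℝ)} (hW : IsWhitneyDecomp U W) {q : ℂ × ℝ} (hq : q ∈ W)
include hW hq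

lemma side_pos : 0 < q.2 := by
  obtain ⟨n, hn⟩ := hW.dyadic q hq
  rw [hn]
  positivity

lemma center_mem_square : q.1 ∈ square q.1 q.2 := by
  simp [square, div_nonneg (hW.side_pos hq).le zero_le_two]

lemma square_subset : square q.1 q.2 ⊆ U :=
  hW.cover ▸ subset_biUnion_of_mem (u := fun q : ℂ × ℝ ↦ square q.1 q.2) hq

lemma diam_le_infDist {x : ℂ} (hx : x ∈ square q.1 q.2) : diam (square q.1 q.2) ≤ infDist x Uᶜ :=
  (hW.lower q hq).trans (sdist_le_infDist hx)

lemma infDist_le_five_mul_diam {x : ℂ} (hx : x ∈ square q.1 q.2) :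
    infDist x Uᶜ ≤ 5 * diam (square q.1 q.2) := by
  linarith [infDist_le_diam_add_sdist (B := Uᶜ) (isBounded_square q.1 q.2) hx, hW.upper q hq]

end IsWhitneyDecomp

lemma floor_div_mem_Icc {y δ : ℝ} {K : ℕ} (hδ : 0 < δ) (hy : |y| ≤ K * δ) :
    ⌊y / δ⌋ ∈ Finset.Icc (-K : ℤ) K := by
  have hquot : |y / δ| ≤ K := by rwa [abs_div, abs_of_pos hδ, div_le_iff₀ hδ]
  obtain ⟨hlower, hupper⟩ := abs_le.1 hquot
  have hfloor : (⌊y / δ⌋ : ℝ) ≤ K := (Int.floor_le _).trans hupper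
  exact Finset.mem_Icc.2 ⟨Int.le_floor.2 (mod_cast hlower), mod_cast hfloor⟩

lemma encard_le_of_disjoint_interior_square {T : Set (ℂ × ℝ)} {b : ℂ} {δ : ℝ} {K : ℕ} (hδ : 0 < δ)
    (hdisj : T.PairwiseDisjoint fun q ↦ interior (square q.1 q.2)) (hside : ∀ q ∈ T, δ ≤ q.2)
    (hdist : ∀ q ∈ T, dist q.1 b ≤ K * δ) : T.encard ≤ ((2 * K + 1) ^ 2 : ℕ) := by
  let cell : ℂ × ℝ → ℤ × ℤ := fun q ↦ (⌊(q.1 - b).re / δ⌋, ⌊(q.1 - b).im / δ⌋)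
  let cells : Finset (ℤ × ℤ) := Finset.Icc (-K : ℤ) K ×ˢ Finset.Icc (-K : ℤ) K
  have hmaps : MapsTo cell T cells := fun q hq ↦ by
    have hqb : ‖q.1 - b‖ ≤ K * δ := dist_eq q.1 b ▸ hdist q hq
    exact Finset.mem_product.2 ⟨floor_div_mem_Icc hδ ((abs_re_le_norm _).trans hqb),
      floor_div_mem_Icc hδ ((abs_im_le_norm _).trans hqb)⟩
  have hclose : ∀ {y y' : ℝ}, ⌊y / δ⌋ = ⌊y' / δ⌋ → |y - y'| < δ := fun hy ↦ by
    simpa only [← sub_div, abs_div, abs_of_pos hδ, div_lt_one hδ] using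
      Int.abs_sub_lt_one_of_floor_eq_floor hy
  have hinj : InjOn cell T := fun q hq q' hq' hcell ↦ by
    by_contra hne
    have hmin : δ ≤ min q.2 q'.2 := le_min (hside q hq) (hside q' hq')
    refine not_disjoint_interior_square ?_ ?_ (hdisj hq hq' hne)
    · simpa using (hclose (congrArg Prod.fst hcell)).trans_le hmin
    · simpa using (hclose (congrArg Prod.snd hcell)).trans_le hmin
  have hcard : cells.card = (2 * K + 1) ^ 2 := by
    rw [Finset.card_product, Int.card_Icc, sq]
    congr 1 <;> lia
  calc T.encard ≤ (cells : Set (ℤ × ℤ)).encard := encard_le_encard_of_injOn hmaps hinj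
    _ = ((2 * K + 1) ^ 2 : ℕ) := by rw [encard_coe_eq_coe_finsetCard, hcard]

theorem IsWhitneyDecomp.encard_inter_whitneyBall_le {U : Set ℂ} {W : Set (ℂ × ℝ)}
    (hW : IsWhitneyDecomp U W) {b : ℂ} (hb : 0 < infDist b Uᶜ) {C : ℝ} (hC : 0 < C) {K : ℕ}
    (hK : 10 * C * (1 + 2 * C) ≤ K) :
    {q ∈ W | (square q.1 q.2 ∩ whitneyBall Uᶜ b C).Nonempty}.encard ≤ ((2 * K + 1) ^ 2 : ℕ) := by
  refine encard_le_of_disjoint_interior_square (b := b) (δ := infDist b Uᶜ / (10 * C))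
    (by positivity) (fun q hq q' hq' hne ↦ ?_) ?_ ?_
  · exact disjoint_iff_inter_eq_empty.2 (hW.disjInt q hq.1 q' hq'.1 hne)
  · rintro q ⟨hq, x, hx, -, hinf⟩
    have hxq : infDist x Uᶜ ≤ 10 * q.2 := by
      linarith [hW.infDist_le_five_mul_diam hq hx, diam_square_le q.1 (hW.side_pos hq).le]
    rw [div_le_iff₀ (by positivity)]
    calc infDist b Uᶜ ≤ C * infDist x Uᶜ := hinf
      _ ≤ C * (10 * q.2) := by gcongr
      _ = q.2 * (10 * C) := by ring
  · rintro q ⟨hq, x, hx, hdist, -⟩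
    have hqx : dist q.1 x ≤ infDist x Uᶜ :=
      (dist_le_diam_of_mem (isBounded_square _ _) (hW.center_mem_square hq) hx).trans
        (hW.diam_le_infDist hq hx)
    have hxb : infDist x Uᶜ ≤ infDist b Uᶜ + dist x b := infDist_le_infDist_add_dist
    calc dist q.1 b ≤ (1 + 2 * C) * infDist b Uᶜ := by linarith [dist_triangle q.1 x b]
      _ = 10 * C * (1 + 2 * C) * (infDist b Uᶜ / (10 * C)) := by field_simp
      _ ≤ K * (infDist b Uᶜ / (10 * C)) := by gcongr

/-! ### Counting the squares met by geodesics -/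

theorem stmt10_general (T : ℝ) : ∃ M : ℕ, ∀ (U : Set ℂ) (φ ψ : ℂ → ℂ), IsRiemannPair U φ ψ →
    ∀ W : Set (ℂ × ℝ), IsWhitneyDecomp U W → ∀ Q ∈ W, ∀ s : ℝ, 0 ≤ s →
      {q ∈ W | ∃ w ∈ square Q.1 Q.2, ∃ t : ℝ, s ≤ t ∧ t ≤ s + T ∧ t ≤ artanh ‖φ w‖ ∧
        ψ ((Real.tanh t / ‖φ w‖ : ℝ) * φ w : ℂ) ∈ square q.1 q.2}.encard ≤ M := by
  obtain ⟨n, hn⟩ := exists_nat_ge (90 * (Real.exp (2 * T) + 2))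
  obtain ⟨K, hK⟩ := exists_nat_ge (10 * (2 : ℝ) ^ n * (1 + 2 * 2 ^ n))
  refine ⟨(2 * K + 1) ^ 2, fun U φ ψ h W hW Q hQ s hs ↦ ?_⟩
  have hc : Q.1 ∈ U := hW.square_subset hQ (hW.center_mem_square hQ)
  have hb : ψ (Real.tanh s * φ Q.1) ∈ U :=
    h.mapsTo_inv (mem_ball_zero_iff.2
      (norm_tanh_mul_lt_one (mem_ball_zero_iff.1 (h.mapsTo hc)).le s))
  refine (encard_le_encard ?_).trans
    (hW.encard_inter_whitneyBall_le (infDist_compl_pos h.isOpen h.ne_univ hb) (by positivity) hK)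
  rintro q ⟨hq, w, hw, t, hst, htT, htw, hmem⟩
  have hwc : dist w Q.1 ≤ infDist Q.1 Uᶜ / 2 := by
    linarith [two_mul_dist_center_le_diam hw, hW.diam_le_infDist hQ (hW.center_mem_square hQ)]
  exact ⟨hq, _, hmem, h.geodesic_mem_whitneyBall hn hc hwc hs hst htT htw⟩

/-- There exists a universal constant `c₀ > 0` with the following property.  Let `U ⊆ ℂ`
be a simply connected domain, `𝒲` a Whitney square decomposition of `U`, and
`Q₀, Q₁ ∈ 𝒲`.  For `j ∈ ℕ`, `j ≥ 1`, let `ℱ_j` be the set of squares `Q̃ ∈ 𝒲` such that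
some hyperbolic geodesic in `U` (parameterized by hyperbolic length) from `cen(Q₀)` to a
point of `Q₁` passes through `Q̃` at some time `t ∈ [j−1, j)`.  (The geodesic from
`cen(Q₀) = ψ(0)` to `w` is `t ↦ ψ(tanh(t) φ(w)/|φ(w)|)` for `t ∈ [0, artanh |φ(w)|]`,
where `ψ : 𝔻 → U` is a Riemann map with inverse `φ`.)  Then `|ℱ_j| ≤ c₀` for every `j`. -/
theorem stmt10 : ∃ M : ℕ, 0 < M ∧
    ∀ (U : Set ℂ), IsOpen U → U ≠ univ →
    ∀ φ ψ : ℂ → ℂ,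
    DifferentiableOn ℂ φ U → BijOn φ U (ball (0:ℂ) 1) →
    DifferentiableOn ℂ ψ (ball (0:ℂ) 1) → BijOn ψ (ball (0:ℂ) 1) U →
    (∀ z ∈ ball (0:ℂ) 1, φ (ψ z) = z) → (∀ z ∈ U, ψ (φ z) = z) →
    ∀ W : Set (ℂ × ℝ), IsWhitneyDecomp U W →
    ∀ Q₀ ∈ W, ∀ Q₁ ∈ W, ψ 0 = Q₀.1 →
    ∀ j : ℕ, 1 ≤ j →
      {q ∈ W | ∃ w ∈ square Q₁.1 Q₁.2, ∃ t : ℝ,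
        (j : ℝ) - 1 ≤ t ∧ t < (j : ℝ) ∧ t ≤ artanh ‖φ w‖ ∧
        ψ ((Real.tanh t / ‖φ w‖ : ℝ) * φ w : ℂ) ∈ square q.1 q.2}.Finite ∧
      {q ∈ W | ∃ w ∈ square Q₁.1 Q₁.2, ∃ t : ℝ,
        (j : ℝ) - 1 ≤ t ∧ t < (j : ℝ) ∧ t ≤ artanh ‖φ w‖ ∧
        ψ ((Real.tanh t / ‖φ w‖ : ℝ) * φ w : ℂ) ∈ square q.1 q.2}.ncard ≤ M := by
  obtain ⟨M, hM⟩ := stmt10_general 1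
  refine ⟨M + 1, M.succ_pos, fun U hU hUne φ ψ hφ hφU hψ hψU hφψ hψφ W hW _ _ Q₁ hQ₁ _ j hj ↦ ?_⟩
  rw [← encard_le_coe_iff_finite_ncard_le]
  refine (encard_le_encard ?_).trans ((hM U φ ψ ⟨hU, hUne, hφ, hψ, hφU.mapsTo, hψU.mapsTo, hφψ, hψφ⟩
    W hW Q₁ hQ₁ (j - 1) (sub_nonneg.2 (mod_cast hj))).trans (mod_cast M.le_succ))
  rintro q ⟨hq, w, hw, t, hjt, htj, htw, hmem⟩
  exact ⟨hq, w, hw, t, hjt, by linarith, htw, hmem⟩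

end
end

section
/- Fix C > 0 and r₀ ≥ 2. Let D̃ ⊆ ℍ be a simply connected domain with i ∈ D̃ and with 0 a prime end of ∂ℍ also in ∂D̃, and suppose inrad(D̃) ≥ r₀ (i.e., B(0, r₀) ∩ ℍ ⊆ D̃). Let z₀ ∈ D̃ with dist_hyp^{D̃}(z₀, i) ≤ C. Then there exists C̃ > 0 depending only on r₀ and C such that dist_hyp^{D̃}(γ^{D̃}_{z₀,0}(t), γ^{ℍ}_{i,0}(ℝ₊)) ≤ C̃ e^{−t} for all t ≥ 0, where γ^{D̃}_{z₀,0} and γ^{ℍ}_{i,0} are the unit-speed hyperbolic geodesics from z₀ to 0 in D̃ and from i to 0 in ℍ respectively. -/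
open Complex Set Metric MeasureTheory

noncomputable section

/-- The length of a `C¹` curve `γ : [0,1] → ℂ` with respect to a conformal density `ρ`. -/
def pathLen (ρ : ℂ → ℝ) (γ : ℝ → ℂ) : ℝ :=
  ∫ t in (0:ℝ)..1, ρ (γ t) * ‖deriv γ t‖

/-- `C¹` curves from `z` to `w` staying in `D`. -/
def PathsIn (D : Set ℂ) (z w : ℂ) : Set (ℝ → ℂ) :=
  {γ | ContDiff ℝ 1 γ ∧ γ 0 = z ∧ γ 1 = w ∧ ∀ t ∈ Icc (0:ℝ) 1, γ t ∈ D}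

/-- The conformal distance on `D` associated to the density `ρ`. -/
def confDist (ρ : ℂ → ℝ) (D : Set ℂ) (z w : ℂ) : ℝ :=
  sInf (pathLen ρ '' PathsIn D z w)

/-- The hyperbolic density on `D`, pulled back from `1/(1-|z|²)` on the unit disk via a
Riemann map `φ : D → 𝔻`. -/
def hypDensity (φ : ℂ → ℂ) (z : ℂ) : ℝ := ‖deriv φ z‖ / (1 - ‖φ z‖ ^ 2)

/-- The hyperbolic distance on `D`, where `φ` is a Riemann map from `D` onto the unit disk. -/
def distHyp (φ : ℂ → ℂ) (D : Set ℂ) (z w : ℂ) : ℝ := confDist (hypDensity φ) D z w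

/-- Hyperbolic distance from a point to a set in `D`. -/
def distHypToSet (φ : ℂ → ℂ) (D : Set ℂ) (z : ℂ) (S : Set ℂ) : ℝ :=
  sInf (distHyp φ D z '' S)

/-!
Conjugate the Riemann map `ψ : 𝔻 → D` by Möbius maps so that the boundary points `1` and `0` both
become `∞`; this gives a holomorphic `F : ℍ → ℍ` whose image contains `{v ∈ ℍ | 1 < ‖v‖}`.
Julia's lemma at `∞`, applied to `F` and to the composition of `F⁻¹` with the inverse Joukowski map,
shows `a Im w ≤ Im F w ≤ a Im w + 1` for some `a > 0`. Hence `w ↦ F w - a w + i` maps `ℍ` into the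
strip `1 ≤ Im ≤ 2`, and the Schwarz-Pick lemma turns the bounded imaginary part into
`|Re F (i y)| = O(√y)`. On the geodesic `y = exp (2 t)`, so there `|Re F / Im F| = O(exp (-t))`.
This ratio is invariant under `z ↦ -r / z`, and it controls the length of the horizontal segment
from the geodesic of `D` to the imaginary axis.
-/

open Filter Topology Bornology ComplexConjugate
open scoped Real

local notation "ℍₒ" => UpperHalfPlane.upperHalfPlaneSet

section Moebius

variable {b w z u : ℂ}

/-- The Möbius map of the upper half-plane onto the unit disc that sends `b` to `0`. -/
def toDisc (b z : ℂ) : ℂ := (z - b) / (z - conj b)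

/-- The inverse of `toDisc b`. -/
def ofDisc (b u : ℂ) : ℂ := (b - conj b * u) / (1 - u)

lemma normSq_sub_conj (z w : ℂ) :
    normSq (z - conj w) = normSq (z - w) + 4 * (z.im * w.im) := by
  simp only [normSq_apply, sub_re, sub_im, conj_re, conj_im]
  ring

lemma ne_zero_of_mem_upperHalfPlaneSet (hz : z ∈ ℍₒ) : z ≠ 0 := by
  rintro rfl
  simp at hz

lemma sub_conj_ne_zero (hz : z ∈ ℍₒ) (hw : w ∈ ℍₒ) : z - conj w ≠ 0 := by
  rw [← normSq_pos, normSq_sub_conj]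
  have := normSq_nonneg (z - w)
  have : 0 < z.im * w.im := mul_pos hz hw
  linarith

lemma one_sub_ne_zero_of_mem_ball (hu : u ∈ ball (0 : ℂ) 1) : 1 - u ≠ 0 := by
  rintro h
  simp [← sub_eq_zero.mp h] at hu

lemma one_sub_normSq_pos (hu : u ∈ ball (0 : ℂ) 1) : 0 < 1 - normSq u := by
  rw [normSq_eq_norm_sq, sub_pos, sq_lt_one_iff₀ (norm_nonneg u)]
  exact mem_ball_zero_iff.mp hu

lemma norm_toDisc_lt_one (hb : b ∈ ℍₒ) (hz : z ∈ ℍₒ) : ‖toDisc b z‖ < 1 := by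
  rw [toDisc, norm_div, div_lt_one (norm_pos_iff.mpr (sub_conj_ne_zero hz hb)),
    ← sq_lt_sq₀ (norm_nonneg _) (norm_nonneg _), ← normSq_eq_norm_sq, ← normSq_eq_norm_sq,
    normSq_sub_conj]
  have : 0 < z.im * b.im := mul_pos hz hb
  linarith

lemma mapsTo_toDisc (hb : b ∈ ℍₒ) : MapsTo (toDisc b) ℍₒ (ball 0 1) := fun _ hz =>
  mem_ball_zero_iff.mpr (norm_toDisc_lt_one hb hz)

lemma im_ofDisc (b u : ℂ) : (ofDisc b u).im = b.im * (1 - normSq u) / normSq (1 - u) := by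
  simp only [ofDisc, div_im, normSq_apply, sub_re, sub_im, mul_re, mul_im, conj_re, conj_im,
    one_re, one_im]
  ring

lemma mapsTo_ofDisc (hb : b ∈ ℍₒ) : MapsTo (ofDisc b) (ball 0 1) ℍₒ := by
  intro u hu
  change 0 < (ofDisc b u).im
  rw [im_ofDisc]
  exact div_pos (mul_pos hb (one_sub_normSq_pos hu))
    (normSq_pos.mpr (one_sub_ne_zero_of_mem_ball hu))

lemma ofDisc_toDisc (hb : b ∈ ℍₒ) (hz : z ∈ ℍₒ) : ofDisc b (toDisc b z) = z := by
  have h_z := sub_conj_ne_zero hz hb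
  have h_b := sub_conj_ne_zero hb hb
  have h_den : 1 - toDisc b z = (b - conj b) / (z - conj b) := by
    rw [toDisc, one_sub_div h_z, sub_sub_sub_cancel_left]
  rw [ofDisc, h_den, toDisc]
  field_simp
  ring

lemma toDisc_ofDisc (hb : b ∈ ℍₒ) (hu : u ∈ ball (0 : ℂ) 1) : toDisc b (ofDisc b u) = u := by
  have h_u := one_sub_ne_zero_of_mem_ball hu
  have h_b := sub_conj_ne_zero hb hb
  have h_num : ofDisc b u - b = (b - conj b) * u / (1 - u) := by
    rw [ofDisc]; field_simp; ring
  have h_den : ofDisc b u - conj b = (b - conj b) / (1 - u) := by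
    rw [ofDisc]; field_simp; ring
  rw [toDisc, h_num, h_den]
  field_simp

lemma toDisc_self (b : ℂ) : toDisc b b = 0 := by simp [toDisc]

lemma ofDisc_zero (b : ℂ) : ofDisc b 0 = b := by simp [ofDisc]

lemma differentiableOn_toDisc (hb : b ∈ ℍₒ) : DifferentiableOn ℂ (toDisc b) ℍₒ :=
  (differentiableOn_id.sub_const b).div (differentiableOn_id.sub_const (conj b))
    fun _ hz => sub_conj_ne_zero hz hb

lemma differentiableOn_ofDisc (b : ℂ) : DifferentiableOn ℂ (ofDisc b) (ball 0 1) :=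
  ((differentiableOn_id.const_mul (conj b)).const_sub b).div (differentiableOn_id.const_sub 1)
    fun _ hu => one_sub_ne_zero_of_mem_ball hu

end Moebius

section SchwarzPick

variable {f : ℂ → ℂ} {z w : ℂ}

lemma norm_toDisc_le_norm_toDisc (hd : DifferentiableOn ℂ f ℍₒ) (hf : MapsTo f ℍₒ ℍₒ)
    (hz : z ∈ ℍₒ) (hw : w ∈ ℍₒ) : ‖toDisc (f w) (f z)‖ ≤ ‖toDisc w z‖ := by
  have h_diff : DifferentiableOn ℂ (toDisc (f w) ∘ f ∘ ofDisc w) (ball 0 1) :=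
    (differentiableOn_toDisc (hf hw)).comp
      (hd.comp (differentiableOn_ofDisc w) (mapsTo_ofDisc hw)) (hf.comp (mapsTo_ofDisc hw))
  have h_maps : MapsTo (toDisc (f w) ∘ f ∘ ofDisc w) (ball 0 1) (closedBall 0 1) :=
    ((mapsTo_toDisc (hf hw)).comp (hf.comp (mapsTo_ofDisc hw))).mono_right ball_subset_closedBall
  have h_zero : (toDisc (f w) ∘ f ∘ ofDisc w) 0 = 0 := by
    simp only [Function.comp_apply, ofDisc_zero, toDisc_self]
  have := norm_le_norm_of_mapsTo_ball h_diff h_maps h_zero (norm_toDisc_lt_one hw hz)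
  rwa [Function.comp_apply, Function.comp_apply, ofDisc_toDisc hw hz] at this

theorem normSq_sub_mul_im_le (hd : DifferentiableOn ℂ f ℍₒ) (hf : MapsTo f ℍₒ ℍₒ)
    (hz : z ∈ ℍₒ) (hw : w ∈ ℍₒ) :
    normSq (f z - f w) * (z.im * w.im) ≤ normSq (z - w) * ((f z).im * (f w).im) := by
  have h := norm_toDisc_le_norm_toDisc hd hf hz hw
  rw [toDisc, toDisc, norm_div, norm_div,
    div_le_div_iff₀ (norm_pos_iff.mpr (sub_conj_ne_zero (hf hz) (hf hw)))
      (norm_pos_iff.mpr (sub_conj_ne_zero hz hw)), ← sq_le_sq₀ (by positivity) (by positivity),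
    mul_pow, mul_pow] at h
  simp only [← normSq_eq_norm_sq, normSq_sub_conj] at h
  linarith

lemma norm_sub_le_of_im_le {M : ℝ} (hd : DifferentiableOn ℂ f ℍₒ) (hf : MapsTo f ℍₒ ℍₒ)
    (hM : ∀ v ∈ ℍₒ, (f v).im ≤ M) (hz : z ∈ ℍₒ) (hw : w ∈ ℍₒ) :
    ‖f z - f w‖ ≤ M * ‖z - w‖ / √(z.im * w.im) := by
  have h_im : 0 < z.im * w.im := mul_pos hz hw
  have h_M : (f z).im * (f w).im ≤ M ^ 2 := by
    rw [sq]
    exact mul_le_mul (hM z hz) (hM w hw) (hf hw).le ((hf hz).le.trans (hM z hz))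
  have h_M_nonneg : 0 ≤ M := (hf hz).le.trans (hM z hz)
  rw [le_div_iff₀ (Real.sqrt_pos.mpr h_im), ← sq_le_sq₀ (by positivity) (by positivity),
    mul_pow, mul_pow, Real.sq_sqrt h_im.le, ← normSq_eq_norm_sq, ← normSq_eq_norm_sq]
  calc normSq (f z - f w) * (z.im * w.im)
      ≤ normSq (z - w) * ((f z).im * (f w).im) := normSq_sub_mul_im_le hd hf hz hw
    _ ≤ normSq (z - w) * M ^ 2 := mul_le_mul_of_nonneg_left h_M (normSq_nonneg _)
    _ = M ^ 2 * normSq (z - w) := mul_comm _ _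

/-- The automorphism of the unit disc that sends `b` to `0`. -/
def discAut (b u : ℂ) : ℂ := (u - b) / (1 - conj b * u)

lemma one_sub_conj_mul_ne_zero_s11 (hz : z ∈ ball (0 : ℂ) 1) (hw : w ∈ ball (0 : ℂ) 1) :
    1 - conj w * z ≠ 0 := by
  apply one_sub_ne_zero_of_mem_ball
  rw [mem_ball_zero_iff] at *
  rw [norm_mul, RCLike.norm_conj]
  exact mul_lt_one_of_nonneg_of_lt_one_left (norm_nonneg w) hw hz.le

lemma mapsTo_discAut (hw : w ∈ ball (0 : ℂ) 1) : MapsTo (discAut w) (ball 0 1) (ball 0 1) := by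
  intro z hz
  have h_gap : normSq (1 - conj w * z) = normSq (z - w) + (1 - normSq w) * (1 - normSq z) := by
    simp only [normSq_apply, sub_re, sub_im, mul_re, mul_im, conj_re, conj_im, one_re, one_im]
    ring
  rw [mem_ball_zero_iff, discAut, norm_div,
    div_lt_one (norm_pos_iff.mpr (one_sub_conj_mul_ne_zero_s11 hz hw)),
    ← sq_lt_sq₀ (norm_nonneg _) (norm_nonneg _), ← normSq_eq_norm_sq, ← normSq_eq_norm_sq, h_gap]
  have := mul_pos (one_sub_normSq_pos hw) (one_sub_normSq_pos hz)
  linarith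

lemma differentiableOn_discAut (hw : w ∈ ball (0 : ℂ) 1) :
    DifferentiableOn ℂ (discAut w) (ball 0 1) :=
  (differentiableOn_id.sub_const w).div ((differentiableOn_id.const_mul (conj w)).const_sub 1)
    fun _ hz => one_sub_conj_mul_ne_zero_s11 hz hw

lemma hasDerivAt_discAut_self (hw : w ∈ ball (0 : ℂ) 1) :
    HasDerivAt (discAut w) (1 - (‖w‖ : ℂ) ^ 2)⁻¹ w := by
  have h_den := one_sub_conj_mul_ne_zero_s11 hw hw
  have h := ((hasDerivAt_id w).sub_const w).div
    (((hasDerivAt_id w).const_mul (conj w)).const_sub 1) h_den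
  refine h.congr_deriv ?_
  rw [← conj_mul', id]
  field_simp
  ring

theorem hypDensity_le_one_div {c : ℂ} {R : ℝ} (hR : 0 < R) (hd : DifferentiableOn ℂ f (ball c R))
    (hf : MapsTo f (ball c R) (ball 0 1)) : hypDensity f c ≤ 1 / R := by
  have hc : c ∈ ball c R := mem_ball_self hR
  have h_diff : DifferentiableOn ℂ (discAut (f c) ∘ f) (ball c R) :=
    (differentiableOn_discAut (hf hc)).comp hd hf
  have h_maps : MapsTo (discAut (f c) ∘ f) (ball c R)
      (closedBall ((discAut (f c) ∘ f) c) 1) := by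
    have h_zero : (discAut (f c) ∘ f) c = 0 := by simp [discAut]
    rw [h_zero]
    exact ((mapsTo_discAut (hf hc)).comp hf).mono_right ball_subset_closedBall
  have h_deriv : deriv (discAut (f c) ∘ f) c = (1 - (‖f c‖ : ℂ) ^ 2)⁻¹ * deriv f c :=
    ((hasDerivAt_discAut_self (hf hc)).comp c
      (hd.differentiableAt (isOpen_ball.mem_nhds hc)).hasDerivAt).deriv
  have h_norm : ‖(1 - (‖f c‖ : ℂ) ^ 2)‖ = 1 - ‖f c‖ ^ 2 := by
    have h_lt : ‖f c‖ < 1 := mem_ball_zero_iff.mp (hf hc)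
    rw [← ofReal_pow, ← ofReal_one, ← ofReal_sub, norm_real, Real.norm_of_nonneg]
    exact (sub_pos.mpr ((sq_lt_one_iff₀ (norm_nonneg _)).mpr h_lt)).le
  have := norm_deriv_le_div_of_mapsTo_ball h_diff h_maps hR
  rwa [h_deriv, norm_mul, norm_inv, h_norm, inv_mul_eq_div] at this

end SchwarzPick

section Julia

variable {f : ℂ → ℂ} {z w : ℂ}

/-- The diameter of the horocycle of the upper half-plane that is tangent to `ℝ` at `0` and passes
through `z`. -/
def horoDiam (z : ℂ) : ℝ := normSq z / z.im

lemma horoDiam_pos (hz : z ∈ ℍₒ) : 0 < horoDiam z :=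
  div_pos (normSq_pos.mpr (ne_zero_of_mem_upperHalfPlaneSet hz)) hz

lemma horoDiam_ofReal_mul_I (y : ℝ) : horoDiam (y * I) = y := by
  simp [horoDiam, normSq_apply]

lemma normSq_one_sub_div_mul_horoDiam (w : ℂ) (hz : z ∈ ℍₒ) :
    normSq (1 - w / z) * horoDiam z = normSq (w - z) / z.im := by
  have h_ne := ne_zero_of_mem_upperHalfPlaneSet hz
  have h_pos := normSq_pos.mpr h_ne
  rw [one_sub_div h_ne, normSq_div, normSq_sub, normSq_sub, mul_comm w, ← conj_re]
  simp only [horoDiam, map_mul, conj_conj, mul_comm (conj z)]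
  field_simp
  ring

lemma horoDiam_mul_im_le (hd : DifferentiableOn ℂ f ℍₒ) (hf : MapsTo f ℍₒ ℍₒ) (hz : z ∈ ℍₒ)
    (hw : w ∈ ℍₒ) :
    normSq (1 - f w / f z) * horoDiam (f z) * w.im ≤
      normSq (1 - w / z) * horoDiam z * (f w).im := by
  rw [normSq_one_sub_div_mul_horoDiam _ (hf hz), normSq_one_sub_div_mul_horoDiam _ hz,
    div_mul_eq_mul_div, div_mul_eq_mul_div, div_le_div_iff₀ (hf hz) hz]
  linarith [normSq_sub_mul_im_le hd hf hw hz]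

variable {ι : Type*} {l : Filter ι} {ζ : ι → ℂ} {c : ι → ℝ} {a b : ℝ}

lemma tendsto_normSq_one_sub_div (w : ℂ) (hζ : Tendsto ζ l (cobounded ℂ)) :
    Tendsto (fun i => normSq (1 - w / ζ i)) l (𝓝 1) := by
  have h := ((tendsto_inv₀_cobounded.comp hζ).const_mul w).const_sub 1
  simpa [Function.comp_def, div_eq_mul_inv] using (continuous_normSq.tendsto _).comp h

theorem mul_im_le_mul_im_of_tendsto_horoDiam [NeBot l] (hd : DifferentiableOn ℂ f ℍₒ)
    (hf : MapsTo f ℍₒ ℍₒ) (hc : ∀ᶠ i in l, 0 ≤ c i) (hζ : ∀ᶠ i in l, ζ i ∈ ℍₒ)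
    (hζ_lim : Tendsto ζ l (cobounded ℂ)) (hf_lim : Tendsto (fun i => f (ζ i)) l (cobounded ℂ))
    (hb : Tendsto (fun i => c i * horoDiam (ζ i)) l (𝓝 b))
    (ha : Tendsto (fun i => c i * horoDiam (f (ζ i))) l (𝓝 a)) (hw : w ∈ ℍₒ) :
    a * w.im ≤ b * (f w).im := by
  have h_left := ((tendsto_normSq_one_sub_div (f w) hf_lim).mul ha).mul_const w.im
  have h_right := ((tendsto_normSq_one_sub_div w hζ_lim).mul hb).mul_const (f w).im
  rw [one_mul] at h_left h_right
  refine le_of_tendsto_of_tendsto h_left h_right ?_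
  filter_upwards [hc, hζ] with i hci hζi
  linarith [mul_le_mul_of_nonneg_left (horoDiam_mul_im_le hd hf hζi hw) hci]

lemma tendsto_ofReal_mul_I_cobounded :
    Tendsto (fun y : ℝ => (y : ℂ) * I) atTop (cobounded ℂ) := by
  rw [← tendsto_norm_atTop_iff_cobounded]
  simpa using tendsto_abs_atTop_atTop

lemma exists_tendsto_horoDiam (hd : DifferentiableOn ℂ f ℍₒ) (hf : MapsTo f ℍₒ ℍₒ)
    (hf_lim : Tendsto (fun y : ℝ => f (y * I)) atTop (cobounded ℂ)) :
    ∃ l ≤ (atTop : Filter ℝ), NeBot l ∧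
      ∃ a, Tendsto (fun y : ℝ => y⁻¹ * horoDiam (f (y * I))) l (𝓝 a) := by
  have h_mem : ∀ᶠ y : ℝ in atTop, y⁻¹ * horoDiam (f (y * I)) ∈ Icc 0 (4 * (f I).im) := by
    filter_upwards [(tendsto_normSq_one_sub_div (f I) hf_lim).eventually_const_lt
        (show (1 / 2 : ℝ) < 1 by norm_num),
      (tendsto_normSq_one_sub_div I tendsto_ofReal_mul_I_cobounded).eventually_lt_const
        (show (1 : ℝ) < 2 by norm_num), eventually_gt_atTop 0] with y h_left h_right hy
    have hy_mem : (y : ℂ) * I ∈ ℍₒ := by simpa using hy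
    have hI_mem : I ∈ ℍₒ := by simp
    have h_diam := horoDiam_pos (hf hy_mem)
    refine ⟨by positivity, ?_⟩
    have h_le := horoDiam_mul_im_le hd hf hy_mem hI_mem
    rw [horoDiam_ofReal_mul_I, I_im, mul_one] at h_le
    have h_FI : 0 < y * (f I).im := mul_pos hy (hf hI_mem)
    rw [inv_mul_le_iff₀ hy]
    nlinarith
  obtain ⟨a, -, ha⟩ := isCompact_Icc.ultrafilter_le_nhds'
    ((Ultrafilter.of atTop).map fun y : ℝ => y⁻¹ * horoDiam (f (y * I)))
    (Ultrafilter.of_le atTop h_mem)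
  exact ⟨↑(Ultrafilter.of (atTop : Filter ℝ)), Ultrafilter.of_le atTop, inferInstance, a, ha⟩

end Julia

section Joukowski

variable {v : ℂ}

/-- The Joukowski map. -/
def joukowski (v : ℂ) : ℂ := v + v⁻¹

/-- The inverse of `joukowski` on the upper half-plane, with values outside the unit disc. -/
def joukowskiInv (v : ℂ) : ℂ := (v + I * Complex.sqrt (4 - v ^ 2)) / 2

lemma im_joukowski (v : ℂ) : (joukowski v).im = v.im * (1 - (normSq v)⁻¹) := by
  rw [joukowski, add_im, inv_im]
  ring

lemma joukowski_mem_upperHalfPlaneSet (hv : v ∈ ℍₒ) (hv_norm : 1 < ‖v‖) : joukowski v ∈ ℍₒ := by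
  change 0 < (joukowski v).im
  rw [im_joukowski, normSq_eq_norm_sq]
  exact mul_pos hv (sub_pos.mpr (inv_lt_one_of_one_lt₀ (one_lt_pow₀ hv_norm two_ne_zero)))

lemma injOn_joukowski : InjOn joukowski {v | 1 < ‖v‖} := by
  intro v hv w hw h
  have hv_ne : v ≠ 0 := norm_pos_iff.mp (zero_lt_one.trans hv)
  have hw_ne : w ≠ 0 := norm_pos_iff.mp (zero_lt_one.trans hw)
  have h_prod : (v - w) * (v * w - 1) = 0 := by
    rw [joukowski, joukowski] at h
    field_simp at h
    linear_combination h
  have h_norm : 1 < ‖v * w‖ := by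
    rw [norm_mul]
    exact one_lt_mul_of_lt_of_le hv (le_of_lt hw)
  have h_ne : v * w - 1 ≠ 0 := fun h => by simp [sub_eq_zero.mp h] at h_norm
  exact sub_eq_zero.mp ((mul_eq_zero.mp h_prod).resolve_right h_ne)

lemma four_sub_sq_mem_slitPlane (hv : v ∈ ℍₒ) : 4 - v ^ 2 ∈ slitPlane := by
  have hv_im : 0 < v.im := hv
  by_cases h_re : v.re = 0
  · left
    simp only [sub_re, re_ofNat, sq, mul_re, h_re]
    nlinarith
  · right
    simpa [sq, mul_im, ← two_mul, mul_comm v.im] using ⟨h_re, hv_im.ne'⟩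

lemma sq_sqrt (z : ℂ) : Complex.sqrt z ^ 2 = z := cpow_nat_inv_pow z two_ne_zero

lemma mapsTo_joukowskiInv : MapsTo joukowskiInv ℍₒ ℍₒ := by
  intro v hv
  have h_sqrt : 0 ≤ (Complex.sqrt (4 - v ^ 2)).re := by
    rw [Complex.sqrt, cpow_inv_two_re]
    positivity
  change 0 < (joukowskiInv v).im
  have hv_im : 0 < v.im := hv
  have : (joukowskiInv v).im = (v.im + (Complex.sqrt (4 - v ^ 2)).re) / 2 := by
    simp [joukowskiInv]
  linarith

lemma joukowski_joukowskiInv (hv : v ∈ ℍₒ) : joukowski (joukowskiInv v) = v := by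
  have h_ne := ne_zero_of_mem_upperHalfPlaneSet (mapsTo_joukowskiInv hv)
  have h_quad : joukowskiInv v ^ 2 + 1 = joukowskiInv v * v := by
    rw [joukowskiInv]
    linear_combination
      (1 / 4 : ℂ) * Complex.sqrt (4 - v ^ 2) ^ 2 * I_sq - (1 / 4 : ℂ) * sq_sqrt (4 - v ^ 2)
  rw [joukowski]
  field_simp
  exact h_quad

lemma one_lt_norm_joukowskiInv (hv : v ∈ ℍₒ) : 1 < ‖joukowskiInv v‖ := by
  have h_im : 0 < (joukowskiInv v).im := mapsTo_joukowskiInv hv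
  have h_pos : 0 < (joukowski (joukowskiInv v)).im := by rwa [joukowski_joukowskiInv hv]
  have h_normSq : 0 < normSq (joukowskiInv v) :=
    normSq_pos.mpr (ne_zero_of_mem_upperHalfPlaneSet h_im)
  rw [im_joukowski, mul_pos_iff_of_pos_left h_im, sub_pos, inv_lt_one₀ h_normSq,
    normSq_eq_norm_sq] at h_pos
  exact (one_lt_sq_iff₀ (norm_nonneg _)).mp h_pos

lemma joukowskiInv_joukowski (hv : v ∈ ℍₒ) (hv_norm : 1 < ‖v‖) :
    joukowskiInv (joukowski v) = v :=
  have hJ := joukowski_mem_upperHalfPlaneSet hv hv_norm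
  injOn_joukowski (one_lt_norm_joukowskiInv hJ) hv_norm (joukowski_joukowskiInv hJ)

lemma differentiableOn_joukowskiInv : DifferentiableOn ℂ joukowskiInv ℍₒ := by
  have h_sqrt : DifferentiableOn ℂ (fun v => Complex.sqrt (4 - v ^ 2)) ℍₒ :=
    differentiableOn_sqrt.comp (by fun_prop) fun _ hv => four_sub_sq_mem_slitPlane hv
  exact (differentiableOn_id.add (h_sqrt.const_mul I)).div_const 2

variable {ι : Type*} {l : Filter ι} {ζ : ι → ℂ} {c : ι → ℝ} {a : ℝ}

lemma tendsto_joukowski_cobounded : Tendsto joukowski (cobounded ℂ) (cobounded ℂ) := by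
  rw [← tendsto_norm_atTop_iff_cobounded]
  refine tendsto_atTop_mono' _ ?_
    (tendsto_atTop_add_const_right _ (-1) tendsto_norm_cobounded_atTop)
  filter_upwards [tendsto_norm_cobounded_atTop.eventually_ge_atTop 1] with v hv
  have h_inv : ‖v⁻¹‖ ≤ 1 := by
    rw [norm_inv]
    exact inv_le_one_of_one_le₀ hv
  have h_tri := norm_sub_le (v + v⁻¹) v⁻¹
  rw [add_sub_cancel_right] at h_tri
  rw [joukowski]
  linarith

lemma horoDiam_joukowski (hv : v ≠ 0) : horoDiam (joukowski v) =
    horoDiam v * (normSq (1 + (v⁻¹) ^ 2) / (1 - normSq v⁻¹)) := by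
  have h : joukowski v = v * (1 + (v⁻¹) ^ 2) := by rw [joukowski]; field_simp
  rw [horoDiam, im_joukowski, h, horoDiam, normSq_mul, normSq_inv, mul_div_mul_comm]

lemma tendsto_horoDiam_joukowski (hζ_lim : Tendsto ζ l (cobounded ℂ))
    (ha : Tendsto (fun i => c i * horoDiam (ζ i)) l (𝓝 a)) :
    Tendsto (fun i => c i * horoDiam (joukowski (ζ i))) l (𝓝 a) := by
  have h_inv : Tendsto (fun i => (ζ i)⁻¹) l (𝓝 0) := tendsto_inv₀_cobounded.comp hζ_lim
  have h_num : Tendsto (fun i => normSq (1 + (ζ i)⁻¹ ^ 2)) l (𝓝 1) := by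
    simpa [Function.comp_def] using
      (continuous_normSq.tendsto _).comp ((h_inv.pow 2).const_add 1)
  have h_den : Tendsto (fun i => 1 - normSq (ζ i)⁻¹) l (𝓝 1) := by
    simpa [Function.comp_def] using ((continuous_normSq.tendsto 0).comp h_inv).const_sub 1
  have h := ha.mul (h_num.div h_den one_ne_zero)
  rw [div_one, mul_one] at h
  refine h.congr' ?_
  filter_upwards [hζ_lim.eventually_ne_cobounded 0] with i hi
  rw [horoDiam_joukowski hi, mul_assoc, Pi.div_apply]

end Joukowski

section AngularDerivative

variable {F H : ℂ → ℂ} {v : ℂ}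

lemma im_le_im_joukowski_add_one (hv : 1 < ‖v‖) : v.im ≤ (joukowski v).im + 1 := by
  have h_norm : 0 < ‖v‖ ^ 2 := by positivity
  have h_im : v.im / ‖v‖ ^ 2 ≤ 1 := by
    rw [div_le_one h_norm]
    nlinarith [im_le_norm v]
  rw [im_joukowski, normSq_eq_norm_sq, mul_sub, mul_one, ← div_eq_mul_inv]
  linarith

theorem exists_mul_im_le_im_le_mul_im_add_one (hF_diff : DifferentiableOn ℂ F ℍₒ)
    (hF : MapsTo F ℍₒ ℍₒ) (hH_diff : DifferentiableOn ℂ H ℍₒ) (hH : MapsTo H ℍₒ ℍₒ)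
    (hHF : ∀ w ∈ ℍₒ, 1 < ‖F w‖ → H (joukowski (F w)) = w)
    (hF_lim : Tendsto (fun y : ℝ => F (y * I)) atTop (cobounded ℂ)) :
    ∃ a > 0, ∀ w ∈ ℍₒ, a * w.im ≤ (F w).im ∧ (F w).im ≤ a * w.im + 1 := by
  obtain ⟨l, hl, _, a, ha⟩ := exists_tendsto_horoDiam hF_diff hF hF_lim
  have h_inv_nonneg : ∀ᶠ y : ℝ in l, 0 ≤ y⁻¹ :=
    hl <| (eventually_ge_atTop 0).mono fun _ => inv_nonneg.mpr
  have h_axis : ∀ᶠ y : ℝ in l, (y : ℂ) * I ∈ ℍₒ :=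
    hl <| (eventually_gt_atTop 0).mono fun _ hy => by simpa using hy
  have h_axis_lim := tendsto_ofReal_mul_I_cobounded.mono_left hl
  have h_axis_diam : Tendsto (fun y : ℝ => y⁻¹ * horoDiam (y * I)) l (𝓝 1) := by
    refine tendsto_const_nhds.congr' (hl ?_)
    filter_upwards [eventually_ne_atTop 0] with y hy
    rw [horoDiam_ofReal_mul_I, inv_mul_cancel₀ hy]
  have hF_lim' := hF_lim.mono_left hl
  have h_large : ∀ᶠ y : ℝ in l, 1 < ‖F (y * I)‖ :=
    (tendsto_norm_cobounded_atTop.comp hF_lim').eventually_gt_atTop 1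
  have h_HF : (fun y : ℝ => (y : ℂ) * I) =ᶠ[l] fun y => H (joukowski (F (y * I))) := by
    filter_upwards [h_axis, h_large] with y hy h_norm using (hHF _ hy h_norm).symm
  have h_lower : ∀ w ∈ ℍₒ, a * w.im ≤ (F w).im := fun w hw => by
    simpa using mul_im_le_mul_im_of_tendsto_horoDiam hF_diff hF h_inv_nonneg h_axis h_axis_lim
      hF_lim' h_axis_diam ha hw
  have h_upper : ∀ v ∈ ℍₒ, v.im ≤ a * (H v).im := fun v hv => by
    simpa using mul_im_le_mul_im_of_tendsto_horoDiam hH_diff hH h_inv_nonneg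
      (by filter_upwards [h_axis, h_large] with y hy h_norm using
        joukowski_mem_upperHalfPlaneSet (hF hy) h_norm)
      (tendsto_joukowski_cobounded.comp hF_lim') (h_axis_lim.congr' h_HF)
      (tendsto_horoDiam_joukowski hF_lim' ha)
      (h_axis_diam.congr' (h_HF.mono fun y hy => congrArg (y⁻¹ * horoDiam ·) hy)) hv
  have hI_mem : I ∈ ℍₒ := by simp
  have ha_pos : 0 < a :=
    pos_of_mul_pos_left (hI_mem.trans_le (h_upper I hI_mem)) (hH hI_mem).le
  refine ⟨a, ha_pos, fun w hw => ⟨h_lower w hw, ?_⟩⟩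
  rcases lt_or_ge 1 ‖F w‖ with h_norm | h_norm
  · have h_J := h_upper _ (joukowski_mem_upperHalfPlaneSet (hF hw) h_norm)
    rw [hHF w hw h_norm] at h_J
    exact (im_le_im_joukowski_add_one h_norm).trans (add_le_add_left h_J 1)
  · exact (im_le_norm _).trans (h_norm.trans (le_add_of_nonneg_left (mul_pos ha_pos hw).le))

end AngularDerivative

section HyperbolicDistance

variable {φ ψ : ℂ → ℂ} {D : Set ℂ} {z w p : ℂ} {γ : ℝ → ℂ} {K r : ℝ}

lemma one_sub_norm_sq_pos (hφ : MapsTo φ D (ball 0 1)) (hz : z ∈ D) : 0 < 1 - ‖φ z‖ ^ 2 := by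
  rw [← normSq_eq_norm_sq]
  exact one_sub_normSq_pos (hφ hz)

lemma hypDensity_nonneg (hφ : MapsTo φ D (ball 0 1)) (hz : z ∈ D) : 0 ≤ hypDensity φ z :=
  div_nonneg (norm_nonneg _) (one_sub_norm_sq_pos hφ hz).le

lemma pathLen_nonneg (hφ : MapsTo φ D (ball 0 1)) (hγ : γ ∈ PathsIn D z w) :
    0 ≤ pathLen (hypDensity φ) γ :=
  intervalIntegral.integral_nonneg zero_le_one fun t ht =>
    mul_nonneg (hypDensity_nonneg hφ (hγ.2.2.2 t ht)) (norm_nonneg _)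

lemma distHyp_nonneg (hφ : MapsTo φ D (ball 0 1)) (z w : ℂ) : 0 ≤ distHyp φ D z w := by
  refine Real.sInf_nonneg ?_
  rintro _ ⟨γ, hγ, rfl⟩
  exact pathLen_nonneg hφ hγ

lemma distHypToSet_le (hφ : MapsTo φ D (ball 0 1)) {S : Set ℂ} (hw : w ∈ S) :
    distHypToSet φ D z S ≤ distHyp φ D z w := by
  refine csInf_le ⟨0, ?_⟩ ⟨w, hw, rfl⟩
  rintro _ ⟨x, -, rfl⟩
  exact distHyp_nonneg hφ z x

lemma distHyp_le_of_speed_le (hφ : MapsTo φ D (ball 0 1)) (hγ : γ ∈ PathsIn D z w)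
    (hK : ∀ t ∈ Icc (0 : ℝ) 1, hypDensity φ (γ t) * ‖deriv γ t‖ ≤ K) : distHyp φ D z w ≤ K := by
  have h_bdd : BddBelow (pathLen (hypDensity φ) '' PathsIn D z w) := by
    refine ⟨0, ?_⟩
    rintro _ ⟨γ, hγ, rfl⟩
    exact pathLen_nonneg hφ hγ
  have h_len : ‖pathLen (hypDensity φ) γ‖ ≤ K * |1 - 0| := by
    refine intervalIntegral.norm_integral_le_of_norm_le_const fun t ht => ?_
    have ht' : t ∈ Icc (0 : ℝ) 1 := Ioc_subset_Icc_self (uIoc_of_le (zero_le_one' ℝ) ▸ ht)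
    rw [Real.norm_of_nonneg
      (mul_nonneg (hypDensity_nonneg hφ (hγ.2.2.2 t ht')) (norm_nonneg _))]
    exact hK t ht'
  rw [sub_zero, abs_one, mul_one] at h_len
  exact (csInf_le h_bdd ⟨γ, hγ, rfl⟩).trans ((le_abs_self _).trans h_len)

theorem distHyp_le_norm_sub_div (hd : DifferentiableOn ℂ φ D) (hφ : MapsTo φ D (ball 0 1))
    (hr : 0 < r) (h_seg : ∀ x ∈ segment ℝ z w, ball x r ⊆ D) :
    distHyp φ D z w ≤ ‖w - z‖ / r := by
  have h_ball : ∀ t ∈ Icc (0 : ℝ) 1, ball (z + t • (w - z)) r ⊆ D := fun t ht =>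
    h_seg _ (segment_eq_image' ℝ z w ▸ mem_image_of_mem _ ht)
  have h_path : (fun t : ℝ => z + t • (w - z)) ∈ PathsIn D z w :=
    ⟨by fun_prop, by simp, by simp, fun t ht => h_ball t ht (mem_ball_self hr)⟩
  refine distHyp_le_of_speed_le hφ h_path fun t ht => ?_
  have h_deriv : deriv (fun t : ℝ => z + t • (w - z)) t = w - z := by
    simpa using (((hasDerivAt_id t).smul_const (w - z)).const_add z).deriv
  have h_density := hypDensity_le_one_div hr (hd.mono (h_ball t ht)) (hφ.mono_left (h_ball t ht))
  rw [h_deriv, ← one_div_mul_eq_div]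
  exact mul_le_mul_of_nonneg_right h_density (norm_nonneg _)

theorem distHyp_im_mul_I_le {δ : ℝ} (hd : DifferentiableOn ℂ φ D) (hφ : MapsTo φ D (ball 0 1))
    (h_ball : ball 0 r ∩ ℍₒ ⊆ D) (hδ : 0 < δ) (hδ_one : δ ≤ 1) (hp : p ∈ ℍₒ)
    (hpr : (1 + δ) * ‖p‖ ≤ r) : distHyp φ D p (p.im * I) ≤ |p.re| / (δ * p.im) := by
  have hp_im : 0 < p.im := hp
  have h_seg : ∀ x ∈ segment ℝ p (p.im * I), ‖x‖ ≤ ‖p‖ ∧ x.im = p.im := fun x hx => by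
    refine ⟨mem_closedBall_zero_iff.mp ((convex_closedBall (0 : ℂ) ‖p‖).segment_subset
      (by simp) (by simpa using abs_im_le_norm p) hx), ?_⟩
    obtain ⟨s, t, -, -, h_sum, rfl⟩ := hx
    simp [← add_mul, h_sum]
  have h_disc : ∀ x ∈ segment ℝ p (p.im * I), ball x (δ * p.im) ⊆ D := fun x hx y hy => by
    obtain ⟨hx_norm, hx_im⟩ := h_seg x hx
    rw [mem_ball, dist_eq_norm] at hy
    refine h_ball ⟨mem_ball_zero_iff.mpr ?_, ?_⟩
    · have := norm_le_norm_add_norm_sub' y x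
      nlinarith [im_le_norm p]
    · have := (abs_lt.mp ((abs_im_le_norm (y - x)).trans_lt hy)).1
      rw [sub_im, hx_im] at this
      change 0 < y.im
      nlinarith
  have h_norm : ‖(p.im : ℂ) * I - p‖ = |p.re| := by
    nth_rw 2 [← re_add_im p]
    rw [sub_add_cancel_right, norm_neg, norm_real, Real.norm_eq_abs]
  rw [← h_norm]
  exact distHyp_le_norm_sub_div hd hφ (mul_pos hδ hp_im) h_disc

lemma continuousOn_hypDensity (hD : IsOpen D) (hd : DifferentiableOn ℂ φ D)
    (hφ : MapsTo φ D (ball 0 1)) : ContinuousOn (hypDensity φ) D :=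
  (hd.deriv hD).continuousOn.norm.div (continuousOn_const.sub (hd.continuousOn.norm.pow 2))
    fun _ hz => (one_sub_norm_sq_pos hφ hz).ne'

lemma exists_hasDerivAt_neg_log_one_sub_norm_sq (hD : IsOpen D) (hd : DifferentiableOn ℂ φ D)
    (hφ : MapsTo φ D (ball 0 1)) {t : ℝ} (hγ : DifferentiableAt ℝ γ t) (hγ_mem : γ t ∈ D) :
    ∃ g ≤ 2 * (hypDensity φ (γ t) * ‖deriv γ t‖),
      HasDerivAt (fun t => -Real.log (1 - ‖φ (γ t)‖ ^ 2)) g t := by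
  have h_pos := one_sub_norm_sq_pos hφ hγ_mem
  have h_comp : HasDerivAt (fun t => φ (γ t)) (deriv φ (γ t) * deriv γ t) t :=
    (hd.differentiableAt (hD.mem_nhds hγ_mem)).hasDerivAt.comp_of_eq t hγ.hasDerivAt rfl
  refine ⟨_, ?_, ((h_comp.norm_sq.const_sub 1).log h_pos.ne').neg⟩
  have h_inner : inner ℝ (φ (γ t)) (deriv φ (γ t) * deriv γ t) ≤ ‖deriv φ (γ t)‖ * ‖deriv γ t‖ :=
    calc inner ℝ (φ (γ t)) (deriv φ (γ t) * deriv γ t)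
        ≤ ‖φ (γ t)‖ * ‖deriv φ (γ t) * deriv γ t‖ := real_inner_le_norm _ _
      _ ≤ 1 * ‖deriv φ (γ t) * deriv γ t‖ := by
        gcongr
        exact (mem_ball_zero_iff.mp (hφ hγ_mem)).le
      _ = ‖deriv φ (γ t)‖ * ‖deriv γ t‖ := by rw [one_mul, norm_mul]
  rw [hypDensity, div_mul_eq_mul_div, mul_div_assoc', neg_div', neg_neg]
  gcongr

theorem log_sub_log_le_two_mul_pathLen (hD : IsOpen D) (hd : DifferentiableOn ℂ φ D)
    (hφ : MapsTo φ D (ball 0 1)) (hγ : γ ∈ PathsIn D z w) :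
    Real.log (1 - ‖φ z‖ ^ 2) - Real.log (1 - ‖φ w‖ ^ 2) ≤ 2 * pathLen (hypDensity φ) γ := by
  obtain ⟨hγ_diff, rfl, rfl, hγ_mem⟩ := hγ
  choose! g hg_le hg using fun t (ht : t ∈ Icc (0 : ℝ) 1) =>
    exists_hasDerivAt_neg_log_one_sub_norm_sq hD hd hφ
      (hγ_diff.differentiable one_ne_zero t) (hγ_mem t ht)
  have h_cont : ContinuousOn (fun t => 2 * (hypDensity φ (γ t) * ‖deriv γ t‖)) (Icc 0 1) :=
    (((continuousOn_hypDensity hD hd hφ).comp hγ_diff.continuous.continuousOn hγ_mem).mul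
      (hγ_diff.continuous_deriv le_rfl).norm.continuousOn).const_mul 2
  have h_le := intervalIntegral.sub_le_integral_of_hasDeriv_right_of_le zero_le_one
    (fun t ht => (hg t ht).continuousAt.continuousWithinAt)
    (fun t ht => (hg t (Ioo_subset_Icc_self ht)).hasDerivWithinAt)
    h_cont.integrableOn_Icc (fun t ht => hg_le t (Ioo_subset_Icc_self ht))
  rw [intervalIntegral.integral_const_mul] at h_le
  change _ ≤ 2 * ∫ t in (0 : ℝ)..1, hypDensity φ (γ t) * ‖deriv γ t‖
  linarith

theorem log_sub_log_le_two_mul_distHyp (hD : IsOpen D) (hd : DifferentiableOn ℂ φ D)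
    (hφ : MapsTo φ D (ball 0 1)) (h_ne : (PathsIn D z w).Nonempty) :
    Real.log (1 - ‖φ z‖ ^ 2) - Real.log (1 - ‖φ w‖ ^ 2) ≤ 2 * distHyp φ D z w := by
  rw [← div_le_iff₀' two_pos]
  refine le_csInf (h_ne.image _) ?_
  rintro _ ⟨γ, hγ, rfl⟩
  rw [div_le_iff₀' two_pos]
  exact log_sub_log_le_two_mul_pathLen hD hd hφ hγ

end HyperbolicDistance

section SegmentPath

/-- The segment from `u` to `v` traversed with speed at most `π / 2 * ‖v - u‖`, and extended to all
of `ℝ` without leaving the segment, as `PathsIn` asks for curves that are `C¹` on `ℝ`. -/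
def segmentPath (u v : ℂ) (t : ℝ) : ℂ := u + ((1 - Real.cos (π * t)) / 2) • (v - u)

lemma segmentPath_zero (u v : ℂ) : segmentPath u v 0 = u := by simp [segmentPath]

lemma segmentPath_one (u v : ℂ) : segmentPath u v 1 = v := by simp [segmentPath]

lemma contDiff_segmentPath (u v : ℂ) : ContDiff ℝ 1 (segmentPath u v) := by
  unfold segmentPath
  fun_prop

lemma segmentPath_mem_segment (u v : ℂ) (t : ℝ) : segmentPath u v t ∈ segment ℝ u v := by
  rw [segment_eq_image']
  refine ⟨(1 - Real.cos (π * t)) / 2, ⟨?_, ?_⟩, rfl⟩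
  · linarith [Real.cos_le_one (π * t)]
  · linarith [Real.neg_one_le_cos (π * t)]

lemma norm_deriv_segmentPath_le (u v : ℂ) (t : ℝ) :
    ‖deriv (segmentPath u v) t‖ ≤ π / 2 * ‖v - u‖ := by
  have h_cos : HasDerivAt (fun t => Real.cos (π * t)) (-Real.sin (π * t) * π) t := by
    simpa using ((hasDerivAt_id t).const_mul π).cos
  have h_deriv : deriv (segmentPath u v) t = (π / 2 * Real.sin (π * t)) • (v - u) := by
    have h := ((((h_cos.const_sub 1).div_const 2).smul_const (v - u)).const_add u).deriv
    refine h.trans ?_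
    congr 1
    ring
  rw [h_deriv, norm_smul, Real.norm_eq_abs, abs_mul, abs_of_pos Real.pi_div_two_pos]
  gcongr
  exact mul_le_of_le_one_right Real.pi_div_two_pos.le (Real.abs_sin_le_one _)

end SegmentPath

section RiemannPair

/-- `φ : D → 𝔻` and `ψ : 𝔻 → D` are mutually inverse Riemann maps of the open set `D`; outside `D`
and `𝔻` their values are irrelevant. -/
structure IsRiemannPair_s11 (φ ψ : ℂ → ℂ) (D : Set ℂ) : Prop where
  isOpen : IsOpen D
  differentiableOn : DifferentiableOn ℂ φ D
  differentiableOn_symm : DifferentiableOn ℂ ψ (ball 0 1)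
  mapsTo : MapsTo φ D (ball 0 1)
  mapsTo_symm : MapsTo ψ (ball 0 1) D
  leftInvOn : LeftInvOn ψ φ D
  rightInvOn : RightInvOn ψ φ (ball 0 1)

namespace IsRiemannPair_s11

variable {φ ψ : ℂ → ℂ} {D : Set ℂ} {u v : ℂ} {κ : ℝ}

lemma deriv_mul_deriv (h : IsRiemannPair_s11 φ ψ D) (hu : u ∈ ball (0 : ℂ) 1) :
    deriv φ (ψ u) * deriv ψ u = 1 := by
  have h_comp : HasDerivAt (φ ∘ ψ) (deriv φ (ψ u) * deriv ψ u) u :=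
    (h.differentiableOn.differentiableAt
      (h.isOpen.mem_nhds (h.mapsTo_symm hu))).hasDerivAt.comp u
      (h.differentiableOn_symm.differentiableAt (isOpen_ball.mem_nhds hu)).hasDerivAt
  exact h_comp.unique <| (hasDerivAt_id u).congr_of_eventuallyEq <|
    eventuallyEq_of_mem (isOpen_ball.mem_nhds hu) h.rightInvOn

lemma hypDensity_mul_norm_deriv (h : IsRiemannPair_s11 φ ψ D) (hu : u ∈ ball (0 : ℂ) 1) :
    hypDensity φ (ψ u) * ‖deriv ψ u‖ = 1 / (1 - ‖u‖ ^ 2) := by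
  rw [hypDensity, h.rightInvOn hu, div_mul_eq_mul_div, ← norm_mul, h.deriv_mul_deriv hu, norm_one]

lemma comp_mem_pathsIn (h : IsRiemannPair_s11 φ ψ D) {c : ℝ → ℂ} (hc : ContDiff ℝ 1 c)
    (hc_mem : ∀ t, c t ∈ ball (0 : ℂ) 1) : ψ ∘ c ∈ PathsIn D (ψ (c 0)) (ψ (c 1)) := by
  refine ⟨contDiff_iff_contDiffAt.mpr fun t => ?_, rfl, rfl, fun t _ => h.mapsTo_symm (hc_mem t)⟩
  exact ((h.differentiableOn_symm.analyticAt
    (isOpen_ball.mem_nhds (hc_mem t))).contDiffAt.restrict_scalars ℝ).comp t hc.contDiffAt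

lemma distHyp_comp_le (h : IsRiemannPair_s11 φ ψ D) (hκ : 0 < κ) {c : ℝ → ℂ} {L : ℝ}
    (hc : ContDiff ℝ 1 c) (hc_norm : ∀ t, ‖c t‖ ^ 2 ≤ 1 - κ) (hL : ∀ t, ‖deriv c t‖ ≤ L) :
    distHyp φ D (ψ (c 0)) (ψ (c 1)) ≤ L / κ := by
  have hc_mem : ∀ t, c t ∈ ball (0 : ℂ) 1 := fun t => by
    rw [mem_ball_zero_iff, ← sq_lt_one_iff₀ (norm_nonneg _)]
    linarith [hc_norm t]
  refine distHyp_le_of_speed_le h.mapsTo (h.comp_mem_pathsIn hc hc_mem) fun t _ => ?_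
  have h_deriv : deriv (ψ ∘ c) t = deriv ψ (c t) * deriv c t :=
    ((h.differentiableOn_symm.differentiableAt
      (isOpen_ball.mem_nhds (hc_mem t))).hasDerivAt.comp_of_eq t
      (hc.differentiable one_ne_zero t).hasDerivAt rfl).deriv
  rw [h_deriv, norm_mul, ← mul_assoc, Function.comp_apply,
    h.hypDensity_mul_norm_deriv (hc_mem t), one_div_mul_eq_div]
  have h_gap : κ ≤ 1 - ‖c t‖ ^ 2 := by linarith [hc_norm t]
  exact div_le_div₀ ((norm_nonneg _).trans (hL t)) (hL t) hκ h_gap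

lemma pathsIn_nonempty (h : IsRiemannPair_s11 φ ψ D) (hu : u ∈ ball (0 : ℂ) 1)
    (hv : v ∈ ball (0 : ℂ) 1) : (PathsIn D (ψ u) (ψ v)).Nonempty := by
  have h_path := h.comp_mem_pathsIn (contDiff_segmentPath u v) fun t =>
    (convex_ball (0 : ℂ) 1).segment_subset hu hv (segmentPath_mem_segment u v t)
  rw [segmentPath_zero, segmentPath_one] at h_path
  exact ⟨_, h_path⟩

theorem distHyp_le_pi_div (h : IsRiemannPair_s11 φ ψ D) (hκ : 0 < κ) (hu : ‖u‖ ^ 2 ≤ 1 - κ)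
    (hv : ‖v‖ ^ 2 ≤ 1 - κ) : distHyp φ D (ψ u) (ψ v) ≤ π / κ := by
  have h_one_sub : 0 ≤ 1 - κ := (sq_nonneg _).trans hu
  have h_norm : ∀ t, ‖segmentPath u v t‖ ^ 2 ≤ 1 - κ := fun t => by
    have h_mem := (convex_closedBall (0 : ℂ) √(1 - κ)).segment_subset
      (mem_closedBall_zero_iff.mpr (Real.le_sqrt_of_sq_le hu))
      (mem_closedBall_zero_iff.mpr (Real.le_sqrt_of_sq_le hv)) (segmentPath_mem_segment u v t)
    exact (Real.le_sqrt (norm_nonneg _) h_one_sub).mp (mem_closedBall_zero_iff.mp h_mem)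
  have h_speed : ∀ t, ‖deriv (segmentPath u v) t‖ ≤ π := fun t => by
    have hu_one : ‖u‖ ≤ 1 := (sq_le_one_iff₀ (norm_nonneg _)).mp (by linarith)
    have hv_one : ‖v‖ ≤ 1 := (sq_le_one_iff₀ (norm_nonneg _)).mp (by linarith)
    calc ‖deriv (segmentPath u v) t‖ ≤ π / 2 * ‖v - u‖ := norm_deriv_segmentPath_le u v t
      _ ≤ π / 2 * (1 + 1) := by
        gcongr
        exact (norm_sub_le v u).trans (add_le_add hv_one hu_one)
      _ = π := by ring
  have h_le := h.distHyp_comp_le hκ (contDiff_segmentPath u v) h_norm h_speed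
  rwa [segmentPath_zero, segmentPath_one] at h_le

lemma exp_neg_two_mul_le_one_sub_norm_sq (h : IsRiemannPair_s11 φ ψ D) {w : ℂ} {C : ℝ} (hw : w ∈ D)
    (h_dist : distHyp φ D (ψ 0) w ≤ C) : Real.exp (-(2 * C)) ≤ 1 - ‖φ w‖ ^ 2 := by
  have h_zero : (0 : ℂ) ∈ ball (0 : ℂ) 1 := mem_ball_self one_pos
  have h_paths := h.pathsIn_nonempty h_zero (h.mapsTo hw)
  rw [h.leftInvOn hw] at h_paths
  have h_log := log_sub_log_le_two_mul_distHyp h.isOpen h.differentiableOn h.mapsTo h_paths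
  rw [h.rightInvOn h_zero, norm_zero, zero_pow two_ne_zero, sub_zero, Real.log_one] at h_log
  rw [← Real.le_log_iff_exp_le (one_sub_norm_sq_pos h.mapsTo hw)]
  linarith

end IsRiemannPair_s11

end RiemannPair

section BoundaryChart

variable {φ ψ : ℂ → ℂ} {D : Set ℂ} {r : ℝ} {v z : ℂ}

/-- The inversion `z ↦ -r / z` of the upper half-plane, which exchanges the boundary points `0` and
`∞`. -/
def halfPlaneInversion (r : ℝ) (z : ℂ) : ℂ := -r / z

lemma re_halfPlaneInversion (r : ℝ) (z : ℂ) :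
    (halfPlaneInversion r z).re = -(r * z.re / normSq z) := by
  simp [halfPlaneInversion, div_re, neg_div]

lemma im_halfPlaneInversion (r : ℝ) (z : ℂ) :
    (halfPlaneInversion r z).im = r * z.im / normSq z := by
  simp [halfPlaneInversion, div_im, neg_div]

lemma norm_halfPlaneInversion (hr : 0 ≤ r) (z : ℂ) : ‖halfPlaneInversion r z‖ = r / ‖z‖ := by
  rw [halfPlaneInversion, norm_div, norm_neg, norm_real, Real.norm_of_nonneg hr]

lemma halfPlaneInversion_halfPlaneInversion (hr : r ≠ 0) (z : ℂ) :
    halfPlaneInversion r (halfPlaneInversion r z) = z :=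
  div_div_cancel₀ (neg_ne_zero.mpr (ofReal_ne_zero.mpr hr))

lemma halfPlaneInversion_I (r : ℝ) : halfPlaneInversion r I = r * I := by
  rw [halfPlaneInversion, div_I, neg_mul, neg_neg]

lemma mapsTo_halfPlaneInversion (hr : 0 < r) : MapsTo (halfPlaneInversion r) ℍₒ ℍₒ := by
  intro z hz
  change 0 < (halfPlaneInversion r z).im
  rw [im_halfPlaneInversion]
  exact div_pos (mul_pos hr hz) (normSq_pos.mpr (ne_zero_of_mem_upperHalfPlaneSet hz))

lemma differentiableOn_halfPlaneInversion (r : ℝ) :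
    DifferentiableOn ℂ (halfPlaneInversion r) ℍₒ :=
  (differentiableOn_const _).div differentiableOn_id fun _ => ne_zero_of_mem_upperHalfPlaneSet

lemma halfPlaneInversion_mem_ball (hr : 0 < r) (hv : 1 < ‖v‖) :
    halfPlaneInversion r v ∈ ball (0 : ℂ) r := by
  rw [mem_ball_zero_iff, norm_halfPlaneInversion hr.le]
  exact div_lt_self hr hv

lemma toDisc_I_ofReal_mul_I (y : ℝ) : toDisc I (y * I) = ((y - 1) / (y + 1) : ℝ) := by
  rw [toDisc, conj_I, sub_neg_eq_add, ← sub_one_mul, ← add_one_mul,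
    mul_div_mul_right _ _ I_ne_zero]
  norm_cast

lemma tendsto_sub_one_div_add_one_atTop :
    Tendsto (fun y : ℝ => (y - 1) / (y + 1)) atTop (𝓝[<] 1) := by
  have h_eq : ∀ᶠ y : ℝ in atTop, 1 - 2 / (y + 1) = (y - 1) / (y + 1) := by
    filter_upwards [eventually_ge_atTop 0] with y hy
    field_simp
    ring
  refine tendsto_nhdsWithin_iff.mpr ⟨?_, ?_⟩
  · have h := (tendsto_atTop_add_const_right atTop (1 : ℝ) tendsto_id).const_div_atTop 2
    simpa using (h.const_sub 1).congr' h_eq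
  · filter_upwards [eventually_ge_atTop 0] with y hy
    rw [mem_Iio, div_lt_one (by linarith)]
    linarith

lemma toDisc_I_exp_two_mul_I (t : ℝ) : toDisc I (Real.exp (2 * t) * I) = (Real.tanh t : ℝ) := by
  rw [toDisc_I_ofReal_mul_I, Real.tanh_eq_sinh_div_cosh, Real.sinh_eq, Real.cosh_eq, two_mul,
    Real.exp_add, Real.exp_neg]
  congr 1
  field_simp

/-- The map `ψ : 𝔻 → D` read in the coordinates that move the boundary points `1` of `𝔻` and `0` of
`D` to `∞`. -/
def boundaryChart (r : ℝ) (ψ : ℂ → ℂ) (w : ℂ) : ℂ := halfPlaneInversion r (ψ (toDisc I w))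

lemma tendsto_boundaryChart (hr : 0 < r) (hψ : MapsTo ψ (ball 0 1) ℍₒ)
    (h_lim : Tendsto (fun x : ℝ => ψ x) (𝓝[<] 1) (𝓝 0)) :
    Tendsto (fun y : ℝ => boundaryChart r ψ (y * I)) atTop (cobounded ℂ) := by
  have h_mem : ∀ᶠ y : ℝ in atTop, ψ (toDisc I (y * I)) ∈ ({0}ᶜ : Set ℂ) := by
    filter_upwards [eventually_gt_atTop 0] with y hy
    exact ne_zero_of_mem_upperHalfPlaneSet
      (hψ (mapsTo_toDisc (by simp) (by simpa using hy)))
  have h_zero : Tendsto (fun y : ℝ => ψ (toDisc I (y * I))) atTop (𝓝[≠] 0) := by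
    refine tendsto_nhdsWithin_iff.mpr ⟨?_, h_mem⟩
    simpa only [toDisc_I_ofReal_mul_I, Function.comp_def] using
      h_lim.comp tendsto_sub_one_div_add_one_atTop
  exact (tendsto_mul_left_cobounded (neg_ne_zero.mpr (ofReal_ne_zero.mpr hr.ne'))).comp
    (tendsto_inv₀_nhdsNE_zero.comp h_zero)

namespace IsRiemannPair_s11

lemma mapsTo_boundaryChart (h : IsRiemannPair_s11 φ ψ D) (hD : D ⊆ ℍₒ) (hr : 0 < r) :
    MapsTo (boundaryChart r ψ) ℍₒ ℍₒ :=
  (mapsTo_halfPlaneInversion hr).comp ((h.mapsTo_symm.mono_right hD).comp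
    (mapsTo_toDisc (by simp)))

lemma differentiableOn_boundaryChart (h : IsRiemannPair_s11 φ ψ D) (hD : D ⊆ ℍₒ) :
    DifferentiableOn ℂ (boundaryChart r ψ) ℍₒ :=
  (differentiableOn_halfPlaneInversion r).comp (h.differentiableOn_symm.comp
    (differentiableOn_toDisc (by simp)) (mapsTo_toDisc (by simp)))
    ((h.mapsTo_symm.mono_right hD).comp (mapsTo_toDisc (by simp)))

lemma boundaryChart_ofDisc (h : IsRiemannPair_s11 φ ψ D) (hz : z ∈ D) :
    boundaryChart r ψ (ofDisc I (φ z)) = halfPlaneInversion r z := by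
  rw [boundaryChart, toDisc_ofDisc (by simp) (h.mapsTo hz), h.leftInvOn hz]

theorem exists_mul_im_le_im_boundaryChart_le (h : IsRiemannPair_s11 φ ψ D) (hD : D ⊆ ℍₒ)
    (hr : 0 < r) (h_ball : ball 0 r ∩ ℍₒ ⊆ D)
    (h_lim : Tendsto (fun x : ℝ => ψ x) (𝓝[<] 1) (𝓝 0)) :
    ∃ a > 0, ∀ w ∈ ℍₒ,
      a * w.im ≤ (boundaryChart r ψ w).im ∧ (boundaryChart r ψ w).im ≤ a * w.im + 1 := by
  have h_inv : MapsTo (fun v => halfPlaneInversion r (joukowskiInv v)) ℍₒ D := fun v hv =>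
    h_ball ⟨halfPlaneInversion_mem_ball hr (one_lt_norm_joukowskiInv hv),
      mapsTo_halfPlaneInversion hr (mapsTo_joukowskiInv hv)⟩
  have h_inv_diff : DifferentiableOn ℂ (fun v => halfPlaneInversion r (joukowskiInv v)) ℍₒ :=
    (differentiableOn_halfPlaneInversion r).comp differentiableOn_joukowskiInv mapsTo_joukowskiInv
  refine exists_mul_im_le_im_le_mul_im_add_one
    (H := fun v => ofDisc I (φ (halfPlaneInversion r (joukowskiInv v))))
    (h.differentiableOn_boundaryChart hD) (h.mapsTo_boundaryChart hD hr)
    ((differentiableOn_ofDisc I).comp (h.differentiableOn.comp h_inv_diff h_inv)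
      (h.mapsTo.comp h_inv))
    ((mapsTo_ofDisc (by simp)).comp (h.mapsTo.comp h_inv)) (fun w hw h_norm => ?_)
    (tendsto_boundaryChart hr (h.mapsTo_symm.mono_right hD) h_lim)
  rw [joukowskiInv_joukowski (h.mapsTo_boundaryChart hD hr hw) h_norm, boundaryChart,
    halfPlaneInversion_halfPlaneInversion hr.ne',
    h.rightInvOn (mapsTo_toDisc (by simp) hw), ofDisc_toDisc (by simp) hw]

end IsRiemannPair_s11

end BoundaryChart

section GeodesicBounds

variable {F : ℂ → ℂ} {a k m r y : ℝ} {u w z : ℂ}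

lemma div_four_le_im_ofDisc_I (hu : u ∈ ball (0 : ℂ) 1) (hm : m ≤ 1 - ‖u‖ ^ 2) :
    m / 4 ≤ (ofDisc I u).im := by
  have h_gap := one_sub_normSq_pos hu
  have h_den_pos : 0 < normSq (1 - u) := normSq_pos.mpr (one_sub_ne_zero_of_mem_ball hu)
  have h_den : normSq (1 - u) ≤ 4 := by
    have h_norm : ‖1 - u‖ ≤ 2 := (norm_sub_le 1 u).trans (by
      rw [norm_one]; linarith [mem_ball_zero_iff.mp hu])
    rw [normSq_eq_norm_sq]
    nlinarith [norm_nonneg (1 - u)]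
  rw [im_ofDisc, I_im, one_mul]
  rw [← normSq_eq_norm_sq] at hm
  exact div_le_div₀ h_gap.le hm h_den_pos h_den

lemma norm_ofDisc_I_le (hu : u ∈ ball (0 : ℂ) 1) (hm₀ : 0 < m) (hm : m ≤ 1 - ‖u‖ ^ 2) :
    ‖ofDisc I u‖ ≤ 4 / m := by
  have hu_norm : ‖u‖ < 1 := mem_ball_zero_iff.mp hu
  have h_num : ‖I - conj I * u‖ ≤ 2 := by
    rw [conj_I, neg_mul, sub_neg_eq_add]
    refine (norm_add_le _ _).trans ?_
    rw [norm_mul, norm_I, one_mul]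
    linarith
  have h_den : m / 2 ≤ ‖1 - u‖ := by
    have := norm_sub_norm_le 1 u
    rw [norm_one] at this
    nlinarith
  calc ‖ofDisc I u‖ = ‖I - conj I * u‖ / ‖1 - u‖ := norm_div _ _
    _ ≤ 2 / (m / 2) := div_le_div₀ zero_le_two h_num (half_pos hm₀) h_den
    _ = 4 / m := by ring

lemma norm_ofReal_mul_I_sub_le (hy : 1 ≤ y) (w : ℂ) : ‖(y : ℂ) * I - w‖ ≤ (1 + ‖w‖) * y := by
  refine (norm_sub_le _ _).trans ?_
  rw [norm_mul, norm_I, norm_real, Real.norm_of_nonneg (zero_le_one.trans hy)]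
  nlinarith [norm_nonneg w]

lemma abs_re_apply_ofReal_mul_I_le (hF_diff : DifferentiableOn ℂ F ℍₒ)
    (hF : ∀ w ∈ ℍₒ, a * w.im ≤ (F w).im ∧ (F w).im ≤ a * w.im + 1) (hw : w ∈ ℍₒ) (hy : 1 ≤ y) :
    |(F (y * I)).re| ≤ (‖F w‖ + |a| * ‖w‖ + 1 + 2 * (1 + ‖w‖) / √w.im) * √y := by
  set h : ℂ → ℂ := fun w => F w - a * w + I with h_def
  have h_im : ∀ w, (h w).im = (F w).im - a * w.im + 1 := fun w => by simp [h_def]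
  have h_re : (h (y * I)).re = (F (y * I)).re := by simp [h_def]
  have h_diff : DifferentiableOn ℂ h ℍₒ :=
    (hF_diff.sub (differentiableOn_id.const_mul (a : ℂ))).add_const I
  have h_maps : MapsTo h ℍₒ ℍₒ := fun v hv => by
    change 0 < (h v).im
    linarith [h_im v, (hF v hv).1]
  have h_im_le : ∀ v ∈ ℍₒ, (h v).im ≤ 2 := fun v hv => by linarith [h_im v, (hF v hv).2]
  have hy_mem : (y : ℂ) * I ∈ ℍₒ := by simpa using zero_lt_one.trans_le hy
  have hw_im : 0 < √w.im := Real.sqrt_pos.mpr hw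
  have hy_sqrt : 1 ≤ √y := Real.one_le_sqrt.mpr hy
  have h_base : ‖h w‖ ≤ ‖F w‖ + |a| * ‖w‖ + 1 := by
    refine (norm_add_le _ _).trans ?_
    have := norm_sub_le (F w) (a * w)
    rw [norm_mul, norm_real, Real.norm_eq_abs] at this
    rw [norm_I]
    linarith
  have h_sub : ‖h (y * I) - h w‖ ≤ 2 * (1 + ‖w‖) / √w.im * √y :=
    calc ‖h (y * I) - h w‖ ≤ 2 * ‖(y : ℂ) * I - w‖ / √(((y : ℂ) * I).im * w.im) :=
        norm_sub_le_of_im_le h_diff h_maps h_im_le hy_mem hw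
      _ ≤ 2 * ((1 + ‖w‖) * (√y * √y)) / (√y * √w.im) := by
        rw [Real.mul_self_sqrt (zero_le_one.trans hy), im_ofReal_mul, I_im, mul_one,
          Real.sqrt_mul (zero_le_one.trans hy)]
        gcongr
        exact norm_ofReal_mul_I_sub_le hy w
      _ = 2 * (1 + ‖w‖) / √w.im * √y := by field_simp
  calc |(F (y * I)).re| ≤ ‖h (y * I)‖ := h_re ▸ abs_re_le_norm _
    _ ≤ ‖h w‖ + ‖h (y * I) - h w‖ := norm_le_norm_add_norm_sub' _ _
    _ ≤ (‖F w‖ + |a| * ‖w‖ + 1) * √y + 2 * (1 + ‖w‖) / √w.im * √y :=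
      add_le_add (h_base.trans (le_mul_of_one_le_right (by positivity) hy_sqrt)) h_sub
    _ = _ := (add_mul _ _ _).symm

theorem exists_mul_le_im_boundaryChart_abs_re_le (hr : 1 < r) (hm : 0 < m) :
    ∃ b > 0, ∃ M > 0, ∀ (D : Set ℂ) (φ ψ : ℂ → ℂ), IsRiemannPair_s11 φ ψ D → D ⊆ ℍₒ →
      ball 0 r ∩ ℍₒ ⊆ D → Tendsto (fun x : ℝ => ψ x) (𝓝[<] 1) (𝓝 0) → m ≤ 1 - ‖φ I‖ ^ 2 →
      ∀ y : ℝ, 1 ≤ y → b * y ≤ (boundaryChart r ψ (y * I)).im ∧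
        |(boundaryChart r ψ (y * I)).re| ≤ M * √y := by
  have hr₀ : 0 < r := zero_lt_one.trans hr
  have hb : 0 < (r - 1) / (4 / m) := div_pos (sub_pos.mpr hr) (by positivity)
  refine ⟨(r - 1) / (4 / m), hb,
    r + r / (m / 4) * (4 / m) + 1 + 2 * (1 + 4 / m) / √(m / 4), by positivity,
    fun D φ ψ h hD h_ball h_lim h_base y hy => ?_⟩
  obtain ⟨a, ha, hF⟩ := h.exists_mul_im_le_im_boundaryChart_le hD hr₀ h_ball h_lim
  have hI : I ∈ D := h_ball ⟨by simpa using hr, by simp⟩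
  have hw_mem : ofDisc I (φ I) ∈ ℍₒ := mapsTo_ofDisc (by simp) (h.mapsTo hI)
  have hw_im := div_four_le_im_ofDisc_I (h.mapsTo hI) h_base
  have hw_norm := norm_ofDisc_I_le (h.mapsTo hI) hm h_base
  have hFw : boundaryChart r ψ (ofDisc I (φ I)) = r * I := by
    rw [h.boundaryChart_ofDisc hI, halfPlaneInversion_I]
  have hFw_norm : ‖boundaryChart r ψ (ofDisc I (φ I))‖ = r := by
    rw [hFw, norm_mul, norm_I, mul_one, norm_real, Real.norm_of_nonneg hr₀.le]
  obtain ⟨h_lower, h_upper⟩ := hF _ hw_mem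
  rw [hFw, im_ofReal_mul, I_im, mul_one] at h_lower h_upper
  have ha_ge : (r - 1) / (4 / m) ≤ a := by
    rw [div_le_iff₀ (by positivity)]
    nlinarith [(im_le_norm _).trans hw_norm]
  have ha_le : |a| ≤ r / (m / 4) := by
    rw [abs_of_pos ha, le_div_iff₀ (by positivity)]
    nlinarith
  refine ⟨(mul_le_mul_of_nonneg_right ha_ge (zero_le_one.trans hy)).trans ?_, ?_⟩
  · simpa using (hF (y * I) (by simpa using zero_lt_one.trans_le hy)).1
  · refine
      (abs_re_apply_ofReal_mul_I_le (h.differentiableOn_boundaryChart hD) hF hw_mem hy).trans ?_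
    rw [hFw_norm]
    gcongr

lemma abs_re_halfPlaneInversion_le_iff (hr : 0 < r) (hz : z ≠ 0) :
    |(halfPlaneInversion r z).re| ≤ k * (halfPlaneInversion r z).im ↔ |z.re| ≤ k * z.im := by
  have h_normSq : 0 < normSq z := normSq_pos.mpr hz
  rw [re_halfPlaneInversion, im_halfPlaneInversion, abs_neg, abs_div, abs_mul, abs_of_pos hr,
    abs_of_pos h_normSq, mul_div_assoc', div_le_div_iff_of_pos_right h_normSq, mul_left_comm,
    mul_le_mul_iff_right₀ hr]

/-- The unit-speed geodesic from `ψ 0` towards the boundary point `ψ 1⁻`, where `ψ` is a Riemann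
map with source `𝔻`. -/
def geodesicRay (ψ : ℂ → ℂ) (t : ℝ) : ℂ := ψ (Real.tanh t : ℝ)

lemma ofReal_tanh_mem_ball (t : ℝ) : ((Real.tanh t : ℝ) : ℂ) ∈ ball (0 : ℂ) 1 := by
  rw [mem_ball_zero_iff, norm_real]
  exact Real.abs_tanh_lt_one t

lemma boundaryChart_exp_two_mul_I (r : ℝ) (ψ : ℂ → ℂ) (t : ℝ) :
    boundaryChart r ψ (Real.exp (2 * t) * I) = halfPlaneInversion r (geodesicRay ψ t) := by
  rw [boundaryChart, toDisc_I_exp_two_mul_I, geodesicRay]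

theorem exists_norm_geodesicRay_le_abs_re_le (hr : 1 < r) (hm : 0 < m) :
    ∃ K > 0, ∀ (D : Set ℂ) (φ ψ : ℂ → ℂ), IsRiemannPair_s11 φ ψ D → D ⊆ ℍₒ →
      ball 0 r ∩ ℍₒ ⊆ D → Tendsto (fun x : ℝ => ψ x) (𝓝[<] 1) (𝓝 0) → m ≤ 1 - ‖φ I‖ ^ 2 →
      ∀ t : ℝ, 0 ≤ t → ‖geodesicRay ψ t‖ ≤ K * Real.exp (-(2 * t)) ∧
        |(geodesicRay ψ t).re| ≤ K * Real.exp (-t) * (geodesicRay ψ t).im := by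
  obtain ⟨b, hb, M, hM, h_bounds⟩ := exists_mul_le_im_boundaryChart_abs_re_le hr hm
  have hr₀ : 0 < r := zero_lt_one.trans hr
  refine ⟨r / b + M / b, by positivity, fun D φ ψ h hD h_ball h_lim h_base t ht => ?_⟩
  have hp_mem : geodesicRay ψ t ∈ ℍₒ := hD (h.mapsTo_symm (ofReal_tanh_mem_ball t))
  have hp_im : 0 < (geodesicRay ψ t).im := hp_mem
  have hp_ne := ne_zero_of_mem_upperHalfPlaneSet hp_mem
  obtain ⟨h_im, h_re⟩ := h_bounds D φ ψ h hD h_ball h_lim h_base (Real.exp (2 * t))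
    (Real.one_le_exp (by positivity))
  rw [boundaryChart_exp_two_mul_I] at h_im h_re
  have h_slope : |(geodesicRay ψ t).re| ≤ M / b * Real.exp (-t) * (geodesicRay ψ t).im := by
    rw [← abs_re_halfPlaneInversion_le_iff hr₀ hp_ne]
    calc |(halfPlaneInversion r (geodesicRay ψ t)).re| ≤ M * √(Real.exp (2 * t)) := h_re
      _ = M / b * Real.exp (-t) * (b * Real.exp (2 * t)) := by
        rw [two_mul, Real.exp_add, Real.sqrt_mul_self (Real.exp_pos t).le, Real.exp_neg]
        field_simp
      _ ≤ M / b * Real.exp (-t) * (halfPlaneInversion r (geodesicRay ψ t)).im := by gcongr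
  have h_norm : ‖geodesicRay ψ t‖ ≤ r / b * Real.exp (-(2 * t)) := by
    have h_le := h_im.trans (im_le_norm _)
    rw [norm_halfPlaneInversion hr₀.le, le_div_iff₀ (norm_pos_iff.mpr hp_ne),
      ← le_div_iff₀' (by positivity)] at h_le
    rwa [Real.exp_neg, ← div_eq_mul_inv, div_div]
  constructor
  · refine h_norm.trans ?_
    gcongr
    exact le_add_of_nonneg_right (by positivity)
  · refine h_slope.trans ?_
    gcongr
    exact le_add_of_nonneg_left (by positivity)

end GeodesicBounds

section Convergence

variable {φ ψ : ℂ → ℂ} {D : Set ℂ} {k m r K : ℝ} {p : ℂ}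

/-- The geodesic `γ^ℍ_{i,0}(ℝ₊)`, that is, the segment `(0, i]`. -/
def imaginaryRay : Set ℂ := {w | ∃ s : ℝ, 0 ≤ s ∧ w = (Real.exp (-s) : ℂ) * I}

lemma ofReal_mul_I_mem_imaginaryRay {y : ℝ} (hy : 0 < y) (hy_one : y ≤ 1) :
    (y : ℂ) * I ∈ imaginaryRay :=
  ⟨-Real.log y, neg_nonneg.mpr (Real.log_nonpos hy.le hy_one), by
    rw [neg_neg, Real.exp_log hy]⟩

lemma I_mem_imaginaryRay : I ∈ imaginaryRay := ⟨0, le_rfl, by simp⟩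

lemma distHypToSet_imaginaryRay_le_of_abs_re_le (hd : DifferentiableOn ℂ φ D)
    (hφ : MapsTo φ D (ball 0 1)) (h_ball : ball 0 r ∩ ℍₒ ⊆ D) (hr : 1 < r) (hp : p ∈ ℍₒ)
    (hp_norm : ‖p‖ ≤ 1) (hp_re : |p.re| ≤ k * p.im) :
    distHypToSet φ D p imaginaryRay ≤ k / (1 - r⁻¹) := by
  have hp_im : 0 < p.im := hp
  have hδ : 0 < 1 - r⁻¹ := sub_pos.mpr (inv_lt_one_of_one_lt₀ hr)
  have hr₀ : 0 < r := zero_lt_one.trans hr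
  have hδ_one : 1 - r⁻¹ ≤ 1 := sub_le_self 1 (inv_nonneg.mpr hr₀.le)
  have hδ_r : 1 + (1 - r⁻¹) ≤ r := by
    have := mul_inv_cancel₀ hr₀.ne'
    nlinarith [inv_pos.mpr hr₀]
  have hpr : (1 + (1 - r⁻¹)) * ‖p‖ ≤ r :=
    (mul_le_of_le_one_right (by positivity) hp_norm).trans hδ_r
  calc distHypToSet φ D p imaginaryRay
      ≤ distHyp φ D p (p.im * I) := distHypToSet_le hφ
        (ofReal_mul_I_mem_imaginaryRay hp_im ((im_le_norm p).trans hp_norm))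
    _ ≤ |p.re| / ((1 - r⁻¹) * p.im) := distHyp_im_mul_I_le hd hφ h_ball hδ hδ_one hp hpr
    _ ≤ k / (1 - r⁻¹) := by
      rw [div_le_div_iff₀ (by positivity) hδ]
      nlinarith

lemma exp_neg_two_mul_le_one_sub_tanh_sq {t : ℝ} (ht : 0 ≤ t) :
    Real.exp (-(2 * t)) ≤ 1 - Real.tanh t ^ 2 := by
  have h_sq : 1 - Real.tanh t ^ 2 = 1 / Real.cosh t ^ 2 := by
    rw [Real.tanh_eq_sinh_div_cosh]
    have := Real.cosh_pos t
    field_simp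
    linarith [Real.cosh_sq t]
  have h_le : Real.cosh t ≤ Real.exp t := by
    rw [← Real.cosh_add_sinh]
    exact le_add_of_nonneg_right (Real.sinh_nonneg_iff.mpr ht)
  rw [h_sq, Real.exp_neg, two_mul, Real.exp_add, ← sq, ← one_div]
  gcongr

theorem IsRiemannPair_s11.distHypToSet_imaginaryRay_le (h : IsRiemannPair_s11 φ ψ D) (hI : I ∈ D)
    (hm : 0 < m) (h_base : m ≤ 1 - ‖φ I‖ ^ 2) (hK : 0 < K) {t : ℝ} (ht : 0 ≤ t)
    (h_exp : 1 ≤ K * Real.exp (-(2 * t))) :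
    distHypToSet φ D (geodesicRay ψ t) imaginaryRay ≤ π / min m K⁻¹ * K * Real.exp (-t) := by
  have hκ : 0 < min m K⁻¹ := lt_min hm (inv_pos.mpr hK)
  have h_tanh : ‖((Real.tanh t : ℝ) : ℂ)‖ ^ 2 ≤ 1 - min m K⁻¹ := by
    have h_min : min m K⁻¹ ≤ Real.exp (-(2 * t)) :=
      (min_le_right _ _).trans ((inv_le_iff_one_le_mul₀' hK).mpr h_exp)
    rw [norm_real, Real.norm_eq_abs, sq_abs]
    linarith [exp_neg_two_mul_le_one_sub_tanh_sq ht]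
  have h_φI : ‖φ I‖ ^ 2 ≤ 1 - min m K⁻¹ := by linarith [min_le_left m K⁻¹]
  have h_decay : 1 ≤ K * Real.exp (-t) := h_exp.trans (by gcongr; linarith)
  have h_le := h.distHyp_le_pi_div hκ h_tanh h_φI
  rw [h.leftInvOn hI] at h_le
  calc distHypToSet φ D (geodesicRay ψ t) imaginaryRay
      ≤ distHyp φ D (geodesicRay ψ t) I := distHypToSet_le h.mapsTo I_mem_imaginaryRay
    _ ≤ π / min m K⁻¹ := h_le
    _ ≤ π / min m K⁻¹ * (K * Real.exp (-t)) := le_mul_of_one_le_right (by positivity) h_decay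
    _ = π / min m K⁻¹ * K * Real.exp (-t) := (mul_assoc _ _ _).symm

theorem stmt11_general (C : ℝ) {r₀ : ℝ} (hr₀ : 1 < r₀) :
    ∃ Ct > 0, ∀ (D : Set ℂ) (φ ψ : ℂ → ℂ), IsRiemannPair_s11 φ ψ D → D ⊆ ℍₒ → ball 0 r₀ ∩ ℍₒ ⊆ D →
      Tendsto (fun x : ℝ => ψ x) (𝓝[<] 1) (𝓝 0) → distHyp φ D (ψ 0) I ≤ C →
      ∀ t : ℝ, 0 ≤ t →
        distHypToSet φ D (geodesicRay ψ t) imaginaryRay ≤ Ct * Real.exp (-t) := by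
  have hm : 0 < Real.exp (-(2 * C)) := Real.exp_pos _
  obtain ⟨K, hK, h_bounds⟩ := exists_norm_geodesicRay_le_abs_re_le hr₀ hm
  refine ⟨max (K / (1 - r₀⁻¹)) (π / min (Real.exp (-(2 * C))) K⁻¹ * K),
    lt_max_of_lt_right (by positivity), fun D φ ψ h hD h_ball h_lim h_dist t ht => ?_⟩
  have hI : I ∈ D := h_ball ⟨by simpa using hr₀, by simp⟩
  have h_base := h.exp_neg_two_mul_le_one_sub_norm_sq hI h_dist
  obtain ⟨h_norm, h_re⟩ := h_bounds D φ ψ h hD h_ball h_lim h_base t ht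
  rcases le_or_gt ‖geodesicRay ψ t‖ 1 with h_near | h_far
  · calc distHypToSet φ D (geodesicRay ψ t) imaginaryRay
        ≤ K * Real.exp (-t) / (1 - r₀⁻¹) :=
          distHypToSet_imaginaryRay_le_of_abs_re_le h.differentiableOn h.mapsTo h_ball hr₀
            (hD (h.mapsTo_symm (ofReal_tanh_mem_ball t))) h_near h_re
      _ = K / (1 - r₀⁻¹) * Real.exp (-t) := (div_mul_eq_mul_div _ _ _).symm
      _ ≤ _ := mul_le_mul_of_nonneg_right (le_max_left _ _) (Real.exp_pos _).le
  · exact (h.distHypToSet_imaginaryRay_le hI hm h_base hK ht (h_far.trans_le h_norm).le).trans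
      (mul_le_mul_of_nonneg_right (le_max_right _ _) (Real.exp_pos _).le)

end Convergence

/-- Fix `C > 0` and `r₀ ≥ 2`.  Let `D̃ ⊆ ℍ` be a simply connected domain with `i ∈ D̃`,
with `0` a prime end of `∂D̃`, and with inradius at least `r₀`.  Let `z₀ ∈ D̃` with
`dist_hyp^{D̃}(z₀, i) ≤ C`.  Then there is `C̃ > 0` depending only on `r₀` and `C` such
that `dist_hyp^{D̃}(γ^{D̃}_{z₀,0}(t), γ^{ℍ}_{i,0}(ℝ₊)) ≤ C̃ e^{−t}` for all `t ≥ 0`, where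
`γ^{D̃}_{z₀,0}(t) = ψ(tanh t)` is the unit-speed hyperbolic geodesic in `D̃` from `z₀` to
`0` (with `ψ : 𝔻 → D̃` a Riemann map sending `0 ↦ z₀` and `1⁻ ↦ 0`), and
`γ^{ℍ}_{i,0}(t) = i e^{−t}`. -/
theorem stmt11 (C r₀ : ℝ) (hC : 0 < C) (hr₀ : 2 ≤ r₀) :
    ∃ Ct : ℝ, 0 < Ct ∧
    ∀ (Dt : Set ℂ) (φ ψ : ℂ → ℂ) (z₀ : ℂ),
    IsOpen Dt → Dt ⊆ {z : ℂ | 0 < z.im} → Complex.I ∈ Dt → z₀ ∈ Dt →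
    ball (0:ℂ) r₀ ∩ {z : ℂ | 0 < z.im} ⊆ Dt →
    DifferentiableOn ℂ φ Dt → BijOn φ Dt (ball (0:ℂ) 1) →
    DifferentiableOn ℂ ψ (ball (0:ℂ) 1) → BijOn ψ (ball (0:ℂ) 1) Dt →
    (∀ z ∈ Dt, ψ (φ z) = z) → ψ 0 = z₀ →
    Filter.Tendsto (fun x : ℝ => ψ (x : ℂ)) (nhdsWithin 1 (Iio 1)) (nhds 0) →
    distHyp φ Dt z₀ Complex.I ≤ C →
    ∀ t : ℝ, 0 ≤ t →
      distHypToSet φ Dt (ψ ((Real.tanh t : ℝ) : ℂ))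
          {w : ℂ | ∃ s : ℝ, 0 ≤ s ∧ w = (Real.exp (-s) : ℂ) * Complex.I} ≤
        Ct * Real.exp (-t) := by
  obtain ⟨Ct, hCt, h_bound⟩ := stmt11_general C (one_lt_two.trans_le hr₀)
  refine ⟨Ct, hCt, ?_⟩
  rintro D φ ψ _ hD_open hD - - h_ball hφ hφ_bij hψ hψ_bij h_inv rfl h_lim h_dist
  exact h_bound D φ ψ ⟨hD_open, hφ, hψ, hφ_bij.mapsTo, hψ_bij.mapsTo, h_inv,
    hψ_bij.injOn.rightInvOn_of_leftInvOn h_inv hψ_bij.mapsTo hφ_bij.mapsTo⟩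
    hD h_ball h_lim h_dist

end
end

section
/- Let D ⊆ ℂ be open, X ⊆ D closed in D with two-dimensional Lebesgue measure zero, and let f : D → ℂ be a homeomorphism onto its image which is conformal on D \ X. If f is absolutely continuous on lines (ACL) in D, then f is conformal on D. -/
/-!
By Morera's theorem it suffices that `f` integrates to zero around every rectangle in `D`. The area
formula gives `∫ |f'|² ≤ vol (f K) < ∞` for compact `K ⊆ D`, so `f'` is locally integrable. On
almost every horizontal and vertical segment `f` is absolutely continuous and almost everywhere
complex differentiable, so `f` is recovered there by integrating `f'`, respectively `i f'`.
Fubini's theorem then identifies the two iterated integrals of `f'` over a rectangle, and this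
identity says exactly that the boundary integral of `f` vanishes.
-/

open Complex Set Metric MeasureTheory

noncomputable section

/-- `g` is absolutely continuous on `[a, b]`: for every `ε > 0` there is `δ > 0` such
that for every finite family of subintervals of `[a,b]` with pairwise disjoint interiors
and total length `< δ`, the total variation of `g` over their endpoints is `< ε`. -/
def AbsContOn (g : ℝ → ℂ) (a b : ℝ) : Prop :=
  ∀ ε : ℝ, 0 < ε → ∃ δ : ℝ, 0 < δ ∧ ∀ n : ℕ, ∀ r s : Fin n → ℝ,
    (∀ i, a ≤ r i ∧ r i ≤ s i ∧ s i ≤ b) →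
    (∀ i j, i ≠ j → Ioo (r i) (s i) ∩ Ioo (r j) (s j) = ∅) →
    (∑ i, (s i - r i)) < δ → (∑ i, ‖g (s i) - g (r i)‖) < ε

/-- `f` is absolutely continuous on lines (ACL) in `D`: for Lebesgue-a.e. horizontal line
and a.e. vertical line, `f` is absolutely continuous on every compact segment of that
line contained in `D`. -/
def ACL (f : ℂ → ℂ) (D : Set ℂ) : Prop :=
  (∀ᵐ (y : ℝ) ∂(volume : Measure ℝ), ∀ a b : ℝ, a ≤ b →
    (∀ x ∈ Icc a b, ((x : ℂ) + (y : ℂ) * Complex.I) ∈ D) →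
    AbsContOn (fun x : ℝ => f ((x : ℂ) + (y : ℂ) * Complex.I)) a b) ∧
  (∀ᵐ (x : ℝ) ∂(volume : Measure ℝ), ∀ a b : ℝ, a ≤ b →
    (∀ y ∈ Icc a b, ((x : ℂ) + (y : ℂ) * Complex.I) ∈ D) →
    AbsContOn (fun y : ℝ => f ((x : ℂ) + (y : ℂ) * Complex.I)) a b)

lemma isOpen_diff_of_inter_closure_subset {α : Type*} [TopologicalSpace α] {s t : Set α}
    (hs : IsOpen s) (h : s ∩ closure t ⊆ t) : IsOpen (s \ t) := by
  have : s \ t = s \ closure t :=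
    Subset.antisymm (fun x hx ↦ ⟨hx.1, fun hxt ↦ hx.2 (h ⟨hx.1, hxt⟩)⟩)
      (sdiff_subset_sdiff_right subset_closure)
  exact this ▸ hs.sdiff isClosed_closure

section AbsoluteContinuity

variable {a b : ℝ}

lemma AbsContOn.absolutelyContinuousOnInterval {g : ℝ → ℂ}
    (hg : AbsContOn g (min a b) (max a b)) : AbsolutelyContinuousOnInterval g a b := by
  rw [absolutelyContinuousOnInterval_iff]
  intro ε hε
  obtain ⟨δ, hδ, hgδ⟩ := hg ε hε
  refine ⟨δ, hδ, ?_⟩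
  rintro ⟨n, E⟩ ⟨hmem, hdisj⟩ hlen
  have hsum : ∑ i : Fin n, ‖g (max (E i).1 (E i).2) - g (min (E i).1 (E i).2)‖ < ε := by
    refine hgδ n _ _ (fun i ↦ ?_) (fun i j hij ↦ ?_) ?_
    · obtain ⟨h₁, h₂⟩ := hmem i (by simp)
      exact ⟨le_min h₁.1 h₂.1, min_le_max, max_le h₁.2 h₂.2⟩
    · have hIoc := hdisj (by simp) (by simp) (Fin.val_ne_of_ne hij)
      exact (hIoc.mono Ioo_subset_Ioc_self Ioo_subset_Ioc_self).inter_eq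
    · rw [Finset.sum_range] at hlen
      simpa only [max_sub_min_eq_abs', Real.dist_eq] using hlen
  rw [Finset.sum_range]
  convert hsum using 2 with i
  rcases le_total (E i).1 (E i).2 with h | h
  · rw [max_eq_right h, min_eq_left h, dist_eq_norm']
  · rw [max_eq_left h, min_eq_right h, dist_eq_norm]

lemma absolutelyContinuousOnInterval_comp_of_lipschitzWith {X Y : Type*} [PseudoMetricSpace X]
    [PseudoMetricSpace Y] {K : NNReal} {φ : X → Y} {g : ℝ → X} (hφ : LipschitzWith K φ)
    (hg : AbsolutelyContinuousOnInterval g a b) :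
    AbsolutelyContinuousOnInterval (φ ∘ g) a b := by
  refine squeeze_zero (fun _ ↦ Finset.sum_nonneg fun _ _ ↦ dist_nonneg) (fun E ↦ ?_)
    (by simpa only [mul_zero] using Filter.Tendsto.const_mul (K : ℝ) hg)
  rw [Finset.mul_sum]
  exact Finset.sum_le_sum fun i _ ↦ hφ.dist_le_mul _ _

lemma integral_eq_sub_of_absolutelyContinuousOnInterval {E : Type*} [NormedAddCommGroup E]
    [NormedSpace ℝ E] [CompleteSpace E] {g g' : ℝ → E}
    (hg : AbsolutelyContinuousOnInterval g a b)
    (hderiv : ∀ᵐ t, t ∈ uIcc a b → HasDerivAt g (g' t) t)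
    (hint : IntervalIntegrable g' volume a b) :
    ∫ t in a..b, g' t = g b - g a := by
  refine (SeparatingDual.eq_iff_forall_dual_eq (R := ℝ)).mpr fun φ ↦ ?_
  have hφg := absolutelyContinuousOnInterval_comp_of_lipschitzWith φ.lipschitz hg
  calc φ (∫ t in a..b, g' t) = ∫ t in a..b, φ (g' t) := (φ.intervalIntegral_comp_comm hint).symm
    _ = ∫ t in a..b, deriv (φ ∘ g) t := by
      refine intervalIntegral.integral_congr_ae ?_
      filter_upwards [hderiv] with t ht htab
      exact (φ.hasFDerivAt.comp_hasDerivAt t (ht (uIoc_subset_uIcc htab))).deriv.symm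
    _ = φ (g b - g a) := by rw [hφg.integral_deriv_eq_sub, map_sub, Function.comp, Function.comp]

lemma integral_smul_deriv_comp_eq_sub {f : ℂ → ℂ} {γ : ℝ → ℂ} {v : ℂ}
    (hac : AbsolutelyContinuousOnInterval (f ∘ γ) a b) (hγ : ∀ t, HasDerivAt γ v t)
    (hf : ∀ᵐ t, t ∈ uIcc a b → DifferentiableAt ℂ f (γ t))
    (hint : IntervalIntegrable (fun t ↦ deriv f (γ t)) volume a b) :
    ∫ t in a..b, v • deriv f (γ t) = f (γ b) - f (γ a) := by
  refine integral_eq_sub_of_absolutelyContinuousOnInterval hac ?_ (hint.smul v)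
  filter_upwards [hf] with t ht htab
  exact (ht htab).hasDerivAt.scomp t (hγ t)

end AbsoluteContinuity

section Area

lemma det_restrictScalars_toSpanSingleton (c : ℂ) :
    ((ContinuousLinearMap.toSpanSingleton ℂ c).restrictScalars ℝ).det = ‖c‖ ^ 2 := by
  simp [ContinuousLinearMap.det, LinearMap.det_restrictScalars, Algebra.norm_complex_eq,
    Complex.normSq_eq_norm_sq]

lemma lintegral_enorm_sq_eq_volume_image {s : Set ℂ} {f f' : ℂ → ℂ} (hs : MeasurableSet s)
    (hf : ∀ z ∈ s, HasDerivWithinAt f (f' z) s z) (hinj : InjOn f s) :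
    ∫⁻ z in s, ‖f' z‖ₑ ^ 2 = volume (f '' s) := by
  rw [← lintegral_abs_det_fderiv_eq_addHaar_image volume hs
    (fun z hz ↦ (hf z hz).hasFDerivWithinAt.restrictScalars ℝ) hinj]
  refine lintegral_congr fun z ↦ ?_
  rw [det_restrictScalars_toSpanSingleton, abs_of_nonneg (sq_nonneg _),
    ENNReal.ofReal_pow (norm_nonneg _), ofReal_norm]

lemma memLp_two_deriv_of_injOn {s : Set ℂ} {f : ℂ → ℂ} (hs : MeasurableSet s)
    (hf : ∀ z ∈ s, DifferentiableAt ℂ f z) (hinj : InjOn f s) (hvol : volume (f '' s) < ⊤) :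
    MemLp (deriv f) 2 (volume.restrict s) := by
  refine ⟨(measurable_deriv f).aestronglyMeasurable, ?_⟩
  rw [eLpNorm_lt_top_iff_lintegral_rpow_enorm_lt_top two_ne_zero ENNReal.ofNat_ne_top]
  simpa only [ENNReal.toReal_ofNat, ENNReal.rpow_ofNat, lintegral_enorm_sq_eq_volume_image hs
    (fun z hz ↦ (hf z hz).hasDerivAt.hasDerivWithinAt) hinj] using hvol

lemma integrableOn_deriv_of_injOn {K : Set ℂ} {f : ℂ → ℂ} (hK : IsCompact K)
    (hcont : ContinuousOn f K) (hinj : InjOn f K)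
    (hf : ∀ᵐ z, z ∈ K → DifferentiableAt ℂ f z) : IntegrableOn (deriv f) K := by
  set s := K ∩ {z | DifferentiableAt ℂ f z}
  have hsm : MeasurableSet s := hK.measurableSet.inter (measurableSet_of_differentiableAt ℂ f)
  have hsK : s =ᵐ[volume] K := by
    filter_upwards [hf] with z hz
    exact propext ⟨And.left, fun h ↦ ⟨h, hz h⟩⟩
  have hvol : volume (f '' s) < ⊤ :=
    (measure_mono (image_mono inter_subset_left)).trans_lt
      (hK.image_of_continuousOn hcont).measure_lt_top
  have hL2 : MemLp (deriv f) 2 (volume.restrict K) := by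
    rw [← Measure.restrict_congr_set hsK]
    exact memLp_two_deriv_of_injOn hsm (fun z hz ↦ hz.2) (hinj.mono inter_subset_left) hvol
  have : IsFiniteMeasure (volume.restrict K) := isFiniteMeasure_restrict.mpr hK.measure_ne_top
  exact hL2.integrable one_le_two

end Area

section Fubini

lemma measurePreserving_add_mul_I : MeasurePreserving fun p : ℝ × ℝ ↦ (p.1 : ℂ) + p.2 * I := by
  simpa only [← mk_eq_add_mul_I] using! volume_preserving_equiv_real_prod.symm

lemma ae_ae_add_mul_I {p : ℂ → Prop} (h : ∀ᵐ z, p z) : ∀ᵐ x : ℝ, ∀ᵐ y : ℝ, p (x + y * I) :=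
  Measure.ae_ae_of_ae_prod (measurePreserving_add_mul_I.quasiMeasurePreserving.ae h)

lemma ae_ae_add_mul_I_swap {p : ℂ → Prop} (h : ∀ᵐ z, p z) :
    ∀ᵐ y : ℝ, ∀ᵐ x : ℝ, p (x + y * I) :=
  Measure.ae_ae_of_ae_prod <|
    (measurePreserving_add_mul_I.comp Measure.measurePreserving_swap).quasiMeasurePreserving.ae h

variable {E : Type*} [NormedAddCommGroup E]

lemma integrableOn_uncurry_add_mul_I {g : ℂ → E} {s t : Set ℝ} (hg : IntegrableOn g (s ×ℂ t)) :
    IntegrableOn (Function.uncurry fun x y : ℝ ↦ g (x + y * I)) (s ×ˢ t) := by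
  have := (volume_preserving_equiv_real_prod.symm.integrableOn_comp_preimage
    (MeasurableEquiv.measurableEmbedding _)).mpr hg
  simpa only [Function.uncurry_def, ← mk_eq_add_mul_I] using! this

lemma integrableOn_uncurry_uIoc_of_rectangle {g : ℂ → E} {z w : ℂ}
    (hg : IntegrableOn g (Rectangle z w)) :
    IntegrableOn (Function.uncurry fun x y : ℝ ↦ g (x + y * I))
      (uIoc z.re w.re ×ˢ uIoc z.im w.im) :=
  (integrableOn_uncurry_add_mul_I hg).mono_set
    (prod_mono uIoc_subset_uIcc uIoc_subset_uIcc)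

lemma ae_intervalIntegrable_horizontal {g : ℂ → E} {z w : ℂ}
    (hg : IntegrableOn g (Rectangle z w)) :
    ∀ᵐ y : ℝ, y ∈ uIoc z.im w.im →
      IntervalIntegrable (fun x : ℝ ↦ g (x + y * I)) volume z.re w.re := by
  have h := integrableOn_uncurry_uIoc_of_rectangle hg
  rw [IntegrableOn, Measure.volume_eq_prod, ← Measure.prod_restrict] at h
  simpa only [intervalIntegrable_iff, IntegrableOn, Function.uncurry_apply_pair] using
    (ae_restrict_iff' measurableSet_uIoc).mp h.prod_left_ae

lemma ae_intervalIntegrable_vertical {g : ℂ → E} {z w : ℂ}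
    (hg : IntegrableOn g (Rectangle z w)) :
    ∀ᵐ x : ℝ, x ∈ uIoc z.re w.re →
      IntervalIntegrable (fun y : ℝ ↦ g (x + y * I)) volume z.im w.im := by
  have h := integrableOn_uncurry_uIoc_of_rectangle hg
  rw [IntegrableOn, Measure.volume_eq_prod, ← Measure.prod_restrict] at h
  simpa only [intervalIntegrable_iff, IntegrableOn, Function.uncurry_apply_pair] using
    (ae_restrict_iff' measurableSet_uIoc).mp h.prod_right_ae

end Fubini

section Rectangle

variable {z w : ℂ}

lemma add_mul_I_mem_rectangle {x y : ℝ} (hx : x ∈ uIcc z.re w.re) (hy : y ∈ uIcc z.im w.im) :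
    (x + y * I : ℂ) ∈ Rectangle z w := by
  simpa only [Rectangle, mem_reProdIm, ← mk_eq_add_mul_I] using And.intro hx hy

lemma isCompact_rectangle (z w : ℂ) : IsCompact (Rectangle z w) :=
  isCompact_uIcc.reProdIm isCompact_uIcc

lemma wedgeIntegral_eq_neg_of_ae_segment {E : Type*} [NormedAddCommGroup E] [NormedSpace ℂ E]
    {f g : ℂ → E} (hf : ContinuousOn f (Rectangle z w)) (hg : IntegrableOn g (Rectangle z w))
    (hhor : ∀ᵐ y : ℝ, y ∈ uIoc z.im w.im →
      ∫ x in z.re..w.re, g (x + y * I) = f (w.re + y * I) - f (z.re + y * I))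
    (hver : ∀ᵐ x : ℝ, x ∈ uIoc z.re w.re →
      ∫ y in z.im..w.im, I • g (x + y * I) = f (x + w.im * I) - f (x + z.im * I)) :
    wedgeIntegral z w f = -wedgeIntegral w z f := by
  have hrow : ∀ y ∈ uIcc z.im w.im,
      IntervalIntegrable (fun x : ℝ ↦ f (x + y * I)) volume z.re w.re := fun y hy ↦
    (hf.comp (by fun_prop) fun x hx ↦ add_mul_I_mem_rectangle hx hy).intervalIntegrable
  have hcol : ∀ x ∈ uIcc z.re w.re,
      IntervalIntegrable (fun y : ℝ ↦ f (x + y * I)) volume z.im w.im := fun x hx ↦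
    (hf.comp (by fun_prop) fun y hy ↦ add_mul_I_mem_rectangle hx hy).intervalIntegrable
  have hsides : I • ((∫ y in z.im..w.im, f (w.re + y * I)) - ∫ y in z.im..w.im, f (z.re + y * I))
      = (∫ x in z.re..w.re, f (x + w.im * I)) - ∫ x in z.re..w.re, f (x + z.im * I) := by
    calc _ = I • ∫ y in z.im..w.im, ∫ x in z.re..w.re, g (x + y * I) := by
          rw [← intervalIntegral.integral_sub (hcol _ right_mem_uIcc) (hcol _ left_mem_uIcc),
            intervalIntegral.integral_congr_ae hhor]
      _ = ∫ x in z.re..w.re, ∫ y in z.im..w.im, I • g (x + y * I) := by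
          rw [← intervalIntegral_intervalIntegral_swap (integrableOn_uncurry_uIoc_of_rectangle hg)]
          simp only [intervalIntegral.integral_smul]
      _ = _ := by
          rw [intervalIntegral.integral_congr_ae hver,
            intervalIntegral.integral_sub (hrow _ right_mem_uIcc) (hrow _ left_mem_uIcc)]
  rw [← add_eq_zero_iff_eq_neg, wedgeIntegral_add_wedgeIntegral_eq, add_sub_assoc, ← smul_sub,
    hsides]
  abel

variable {D : Set ℂ} {f : ℂ → ℂ}

lemma ACL.ae_integral_deriv_horizontal (hACL : ACL f D)
    (hdiff : ∀ᵐ ζ, ζ ∈ D → DifferentiableAt ℂ f ζ) (hzw : Rectangle z w ⊆ D)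
    (hint : IntegrableOn (deriv f) (Rectangle z w)) :
    ∀ᵐ y : ℝ, y ∈ uIoc z.im w.im →
      ∫ x in z.re..w.re, deriv f (x + y * I) = f (w.re + y * I) - f (z.re + y * I) := by
  filter_upwards [hACL.1, ae_ae_add_mul_I_swap hdiff, ae_intervalIntegrable_horizontal hint]
    with y hac hd hi hy
  have hmem : ∀ x ∈ uIcc z.re w.re, (x + y * I : ℂ) ∈ D := fun x hx ↦
    hzw (add_mul_I_mem_rectangle hx (uIoc_subset_uIcc hy))
  have hγ : ∀ t : ℝ, HasDerivAt (fun x : ℝ ↦ (x + y * I : ℂ)) 1 t := fun t ↦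
    (hasDerivAt_id t).ofReal_comp.add_const _
  simpa only [one_smul] using integral_smul_deriv_comp_eq_sub
    (hac _ _ min_le_max hmem).absolutelyContinuousOnInterval hγ
    (hd.mono fun x hx hxI ↦ hx (hmem x hxI)) (hi hy)

lemma ACL.ae_integral_deriv_vertical (hACL : ACL f D)
    (hdiff : ∀ᵐ ζ, ζ ∈ D → DifferentiableAt ℂ f ζ) (hzw : Rectangle z w ⊆ D)
    (hint : IntegrableOn (deriv f) (Rectangle z w)) :
    ∀ᵐ x : ℝ, x ∈ uIoc z.re w.re →
      ∫ y in z.im..w.im, I • deriv f (x + y * I) = f (x + w.im * I) - f (x + z.im * I) := by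
  filter_upwards [hACL.2, ae_ae_add_mul_I hdiff, ae_intervalIntegrable_vertical hint]
    with x hac hd hi hx
  have hmem : ∀ y ∈ uIcc z.im w.im, (x + y * I : ℂ) ∈ D := fun y hy ↦
    hzw (add_mul_I_mem_rectangle (uIoc_subset_uIcc hx) hy)
  have hγ : ∀ t : ℝ, HasDerivAt (fun y : ℝ ↦ (x + y * I : ℂ)) I t := fun t ↦ by
    simpa only [id_eq, ofReal_one, one_mul] using
      ((hasDerivAt_id t).ofReal_comp.mul_const I).const_add (x : ℂ)
  exact integral_smul_deriv_comp_eq_sub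
    (hac _ _ min_le_max hmem).absolutelyContinuousOnInterval hγ
    (hd.mono fun y hy hyI ↦ hy (hmem y hyI)) (hi hx)

end Rectangle

theorem ACL.differentiableOn_of_locallyIntegrableOn_deriv {D : Set ℂ} {f : ℂ → ℂ}
    (hACL : ACL f D) (hD : IsOpen D) (hcont : ContinuousOn f D)
    (hdiff : ∀ᵐ z, z ∈ D → DifferentiableAt ℂ f z) (hint : LocallyIntegrableOn (deriv f) D) :
    DifferentiableOn ℂ f D := by
  refine (isConservativeOn_and_continuousOn_iff_isDifferentiableOn hD).mp ⟨fun z w hzw ↦ ?_, hcont⟩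
  have hintR : IntegrableOn (deriv f) (Rectangle z w) :=
    hint.integrableOn_compact_subset hzw (isCompact_rectangle z w)
  exact wedgeIntegral_eq_neg_of_ae_segment (hcont.mono hzw) hintR
    (hACL.ae_integral_deriv_horizontal hdiff hzw hintR)
    (hACL.ae_integral_deriv_vertical hdiff hzw hintR)

theorem stmt13_general (D : Set ℂ) (hD : IsOpen D) (f : ℂ → ℂ) (hcont : ContinuousOn f D)
    (hinj : InjOn f D) (hdiff : ∀ᵐ z, z ∈ D → DifferentiableAt ℂ f z) (hACL : ACL f D) :
    DifferentiableOn ℂ f D := by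
  have hint : LocallyIntegrableOn (deriv f) D :=
    (locallyIntegrableOn_iff hD.isLocallyClosed).mpr fun K hKD hK ↦
      integrableOn_deriv_of_injOn hK (hcont.mono hKD) (hinj.mono hKD)
        (hdiff.mono fun z hz hzK ↦ hz (hKD hzK))
  exact hACL.differentiableOn_of_locallyIntegrableOn_deriv hD hcont hdiff hint

/-- Let `D ⊆ ℂ` be open, `X ⊆ D` closed in `D` with two-dimensional Lebesgue measure
zero, and let `f : D → ℂ` be a homeomorphism onto its image which is conformal on
`D \ X`.  If `f` is absolutely continuous on lines (ACL) in `D`, then `f` is conformal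
on `D`. -/
theorem stmt13 (D : Set ℂ) (hD : IsOpen D) (X : Set ℂ) (hXD : X ⊆ D)
    (hXclosed : D ∩ closure X ⊆ X) (hX0 : volume X = 0)
    (f : ℂ → ℂ) (hcont : ContinuousOn f D) (hinj : InjOn f D)
    (hconf : DifferentiableOn ℂ f (D \ X)) (hACL : ACL f D) :
    DifferentiableOn ℂ f D := by
  refine stmt13_general D hD f hcont hinj ?_ hACL
  filter_upwards [measure_eq_zero_iff_ae_notMem.mp hX0] with z hzX hzD using
    hconf.differentiableAt ((isOpen_diff_of_inter_closure_subset hD hXclosed).mem_nhds ⟨hzD, hzX⟩)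

end
end

section
/- Let (k*_ℓ)_{ℓ ≥ 1} be nonnegative random variables adapted to a filtration (ℱ_ℓ) such that for constants c₀ > 1, c₁ > 0, P[k*_ℓ ≥ t | ℱ_{ℓ−1}] ≤ c₀ exp(−c₀^{−1} e^{c₁ t}) for all t ≥ 0 and all ℓ. Then for every θ > 1 there exists c₂ > 1 depending only on c₀ and c₁ such that E[e^{θ k*_ℓ} | ℱ_{ℓ−1}] ≤ c₂ e^{c₂ θ log θ} almost surely, and consequently for every n, N ∈ ℕ and every b > 0, P[Σ_{j=1}^{n} k*_{N+j} ≥ b] ≤ (c₂ e^{c₂ θ log θ})^{n} e^{−θ b}. -/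
open MeasureTheory

noncomputable section

/-
Rounding `k` up to an integer bounds `e^{θk}` by `1 + ∑_j e^{θ(j+1)} 1{k ≥ j}`, so the tail bound
gives `E[e^{θk} | ℱ] ≤ 1 + ∑_j c₀ exp(θ(j+1) - c₀⁻¹ e^{c₁j})`. The tangent line of the exponential
gives the Legendre bound `s x - a e^{cx} ≤ (s/c)(log(s/(ac)) - 1)`; at `s = 2θ` it makes the
exponent `O(1 + θ log θ) - θj`, and the series is dominated by a geometric one. For the sum, the
conditional moment bounds multiply along the filtration and Markov's inequality concludes.
-/

open scoped ENNReal

theorem mul_sub_mul_exp_le {a c s : ℝ} (ha : 0 < a) (hc : 0 < c) (hs : 0 < s) (x : ℝ) :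
    s * x - a * Real.exp (c * x) ≤ s / c * (Real.log (s / (a * c)) - 1) := by
  have hpos : 0 < s / (a * c) := by positivity
  have htangent := Real.add_one_le_exp (c * x - Real.log (s / (a * c)))
  rw [Real.exp_sub, Real.exp_log hpos, le_div_iff₀ hpos] at htangent
  calc s * x - a * Real.exp (c * x)
      ≤ s * x - a * ((c * x - Real.log (s / (a * c)) + 1) * (s / (a * c))) := by gcongr
    _ = s / c * (Real.log (s / (a * c)) - 1) := by field_simp; ring

theorem exists_mul_add_one_sub_mul_exp_le {a c : ℝ} (ha : 0 < a) (hc : 0 < c) :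
    ∃ A : ℝ, 0 < A ∧ ∀ θ : ℝ, 1 ≤ θ → ∀ x : ℝ,
      θ * (x + 1) - a * Real.exp (c * x) ≤ A * (1 + θ * Real.log θ) - θ * x := by
  set L := |Real.log (2 / (a * c))|
  refine ⟨1 + 2 / c * (1 + L), by positivity, fun θ hθ x => ?_⟩
  have hθ₀ : 0 < θ := by linarith
  have hθ_le : θ ≤ 1 + θ * Real.log θ := by
    linarith [Real.self_sub_one_le_mul_log hθ₀.le]
  have hlog : Real.log (2 * θ / (a * c)) ≤ Real.log θ + L := by
    rw [mul_div_right_comm, Real.log_mul (by positivity) hθ₀.ne', add_comm]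
    gcongr
    exact le_abs_self _
  calc θ * (x + 1) - a * Real.exp (c * x)
      = θ + (2 * θ * x - a * Real.exp (c * x)) - θ * x := by ring
    _ ≤ θ + 2 * θ / c * (Real.log θ + L) - θ * x := by
        gcongr
        -- Bounding at slope `2 * θ` instead of `θ` is what leaves the term `-(θ * x)` to spare.
        refine (mul_sub_mul_exp_le ha hc (by positivity) x).trans ?_
        gcongr
        linarith
    _ = θ + 2 / c * (θ * Real.log θ + L * θ) - θ * x := by ring
    _ ≤ (1 + θ * Real.log θ) + 2 / c * ((1 + θ * Real.log θ) + L * (1 + θ * Real.log θ))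
          - θ * x := by
        gcongr
        linarith
    _ = (1 + 2 / c * (1 + L)) * (1 + θ * Real.log θ) - θ * x := by ring

/-- The double-exponential tail `c₀ exp(-c₀⁻¹ e^{c₁ t})`, the conditional tail bound assumed on the
variables `k*`. The single constant `c₀` serves both as prefactor and as inverse rate. -/
def doubleExpTail (c₀ c₁ t : ℝ) : ℝ :=
  c₀ * Real.exp (-c₀⁻¹ * Real.exp (c₁ * t))

theorem exists_tsum_exp_mul_doubleExpTail_le {c₀ c₁ : ℝ} (hc₀ : 0 < c₀) (hc₁ : 0 < c₁) :
    ∃ A : ℝ, 0 < A ∧ ∀ θ : ℝ, 1 ≤ θ →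
      ∑' j : ℕ, ENNReal.ofReal (Real.exp (θ * (j + 1))) *
        ENNReal.ofReal (doubleExpTail c₀ c₁ j) ≤
      ENNReal.ofReal (c₀ * Real.exp (A * (1 + θ * Real.log θ)) * 2) := by
  obtain ⟨A, hA, hexponent⟩ := exists_mul_add_one_sub_mul_exp_le (inv_pos.2 hc₀) hc₁
  refine ⟨A, hA, fun θ hθ => ?_⟩
  set W := c₀ * Real.exp (A * (1 + θ * Real.log θ))
  have hexp_neg : Real.exp (-θ) ≤ 1 / 2 := by
    rw [Real.exp_neg, ← one_div]
    gcongr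
    linarith [Real.add_one_le_exp θ]
  have hterm (j : ℕ) : Real.exp (θ * (j + 1)) * doubleExpTail c₀ c₁ j ≤ W * (1 / 2) ^ j := by
    calc Real.exp (θ * (j + 1)) * doubleExpTail c₀ c₁ j
        = c₀ * Real.exp (θ * (j + 1) - c₀⁻¹ * Real.exp (c₁ * j)) := by
          rw [doubleExpTail, mul_left_comm, ← Real.exp_add, neg_mul, ← sub_eq_add_neg]
      _ ≤ c₀ * Real.exp (A * (1 + θ * Real.log θ) - θ * j) := by
          gcongr c₀ * Real.exp ?_
          exact hexponent θ hθ j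
      _ = W * Real.exp (-θ) ^ j := by
          rw [← Real.exp_nat_mul, mul_assoc, ← Real.exp_add]
          ring_nf
      _ ≤ W * (1 / 2) ^ j := by gcongr
  calc ∑' j : ℕ, ENNReal.ofReal (Real.exp (θ * (j + 1))) *
        ENNReal.ofReal (doubleExpTail c₀ c₁ j)
      ≤ ∑' j : ℕ, ENNReal.ofReal (W * (1 / 2) ^ j) := by
        gcongr with j
        rw [← ENNReal.ofReal_mul (Real.exp_pos _).le]
        exact ENNReal.ofReal_le_ofReal (hterm j)
    _ = ENNReal.ofReal (W * 2) := by
        rw [← ENNReal.ofReal_tsum_of_nonneg (fun j => by positivity)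
          (summable_geometric_two.mul_left W), tsum_mul_left, tsum_geometric_two]

theorem exists_one_add_tsum_exp_mul_doubleExpTail_le {c₀ c₁ : ℝ} (hc₀ : 0 < c₀) (hc₁ : 0 < c₁) :
    ∃ c₂ : ℝ, 1 < c₂ ∧ ∀ θ : ℝ, 1 ≤ θ →
      1 + ∑' j : ℕ, ENNReal.ofReal (Real.exp (θ * (j + 1))) *
        ENNReal.ofReal (doubleExpTail c₀ c₁ j) ≤
      ENNReal.ofReal (c₂ * Real.exp (c₂ * θ * Real.log θ)) := by
  obtain ⟨A, hA, hseries⟩ := exists_tsum_exp_mul_doubleExpTail_le hc₀ hc₁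
  set B := c₀ * Real.exp A * 2
  have hB : 0 < B := by positivity
  refine ⟨1 + B + A, by linarith, fun θ hθ => ?_⟩
  have hlog : 0 ≤ θ * Real.log θ := mul_nonneg (by linarith) (Real.log_nonneg hθ)
  refine (add_le_add_right (hseries θ hθ) 1).trans ?_
  rw [← ENNReal.ofReal_one, ← ENNReal.ofReal_add zero_le_one (by positivity)]
  refine ENNReal.ofReal_le_ofReal ?_
  calc 1 + c₀ * Real.exp (A * (1 + θ * Real.log θ)) * 2
      = 1 + B * Real.exp (A * (θ * Real.log θ)) := by
        rw [mul_one_add, Real.exp_add]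
        ring
    _ ≤ (1 + B) * Real.exp (A * (θ * Real.log θ)) := by
        linarith [Real.one_le_exp (mul_nonneg hA.le hlog)]
    _ ≤ (1 + B + A) * Real.exp ((1 + B + A) * (θ * Real.log θ)) := by
        gcongr ?_ * Real.exp (?_ * _) <;> linarith
    _ = (1 + B + A) * Real.exp ((1 + B + A) * θ * Real.log θ) := by rw [mul_assoc]

theorem ofReal_exp_mul_le_one_add_tsum {θ : ℝ} (hθ : 0 ≤ θ) (x : ℝ) :
    ENNReal.ofReal (Real.exp (θ * x)) ≤
      1 + ∑' j : ℕ, ENNReal.ofReal (Real.exp (θ * (j + 1))) * (Set.Ici (j : ℝ)).indicator 1 x := by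
  rcases le_total x 0 with hx | hx
  · refine le_add_right (ENNReal.ofReal_le_one.2 (Real.exp_le_one_iff.2 ?_))
    exact mul_nonpos_of_nonneg_of_nonpos hθ hx
  · refine le_add_left (le_trans ?_ (ENNReal.le_tsum ⌊x⌋₊))
    rw [Set.indicator_of_mem (Set.mem_Ici.2 (Nat.floor_le hx)), Pi.one_apply, mul_one]
    gcongr
    exact (Nat.lt_floor_add_one x).le

section ConditionalExpectation

variable {Ω : Type*} {m m0 : MeasurableSpace Ω} {μ : Measure Ω}

theorem lintegral_mul_condLExp (hm : m ≤ m0) [SigmaFinite (μ.trim hm)] {f Y : Ω → ℝ≥0∞}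
    (hf : Measurable f) (hY : Measurable[m] Y) :
    ∫⁻ ω, μ⁻[f | m] ω * Y ω ∂μ = ∫⁻ ω, f ω * Y ω ∂μ := by
  have hdensity : (μ.withDensity μ⁻[f | m]).trim hm = (μ.withDensity f).trim hm := by
    refine @Measure.ext _ m _ _ fun s hs => ?_
    rw [trim_measurableSet_eq hm hs, trim_measurableSet_eq hm hs, withDensity_apply _ (hm s hs),
      withDensity_apply _ (hm s hs), setLIntegral_condLExp hm μ f hs]
  have hY₀ : Measurable Y := hY.mono hm le_rfl
  calc ∫⁻ ω, μ⁻[f | m] ω * Y ω ∂μ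
      = ∫⁻ ω, Y ω ∂(μ.withDensity μ⁻[f | m]) :=
        (lintegral_withDensity_eq_lintegral_mul μ (measurable_condLExp' m μ f) hY₀).symm
    _ = ∫⁻ ω, Y ω ∂(μ.withDensity f) := by
        rw [← lintegral_trim hm hY, hdensity, lintegral_trim hm hY]
    _ = ∫⁻ ω, f ω * Y ω ∂μ := lintegral_withDensity_eq_lintegral_mul μ hf hY₀

theorem lintegral_mul_le_of_condLExp_le (hm : m ≤ m0) [SigmaFinite (μ.trim hm)]
    {f Y : Ω → ℝ≥0∞} {K : ℝ≥0∞} (hf : Measurable f) (hY : Measurable[m] Y)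
    (hK : μ⁻[f | m] ≤ᵐ[μ] fun _ => K) :
    ∫⁻ ω, f ω * Y ω ∂μ ≤ K * ∫⁻ ω, Y ω ∂μ := by
  rw [← lintegral_mul_condLExp hm hf hY, ← lintegral_const_mul K (hY.mono hm le_rfl)]
  refine lintegral_mono_ae ?_
  filter_upwards [hK] with ω hω
  gcongr

theorem condExp_le_of_condLExp_ofReal_le (hm : m ≤ m0) [IsFiniteMeasure μ] {f : Ω → ℝ} {K : ℝ}
    (hf : Measurable f) (hf₀ : 0 ≤ᵐ[μ] f) (hK₀ : 0 ≤ K)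
    (hK : μ⁻[fun ω => ENNReal.ofReal (f ω) | m] ≤ᵐ[μ] fun _ => ENNReal.ofReal K) :
    μ[f | m] ≤ᵐ[μ] fun _ => K := by
  have hint : Integrable f μ := by
    refine ⟨hf.aestronglyMeasurable, (hasFiniteIntegral_iff_ofReal hf₀).2 ?_⟩
    rw [← lintegral_condLExp hm]
    refine (lintegral_mono_ae hK).trans_lt ?_
    rw [lintegral_const]
    finiteness
  filter_upwards [hK, condLExp_ofReal m hint hf₀] with ω hω heq
  rwa [heq, ENNReal.ofReal_le_ofReal_iff hK₀] at hω

theorem condLExp_indicator_one_le [IsFiniteMeasure μ] {s : Set Ω} {p : ℝ} (hs : MeasurableSet s)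
    (hp : μ[s.indicator (fun _ => (1 : ℝ)) | m] ≤ᵐ[μ] fun _ => p) :
    μ⁻[s.indicator 1 | m] ≤ᵐ[μ] fun _ => ENNReal.ofReal p := by
  have hcoe : (fun ω => ENNReal.ofReal (s.indicator (fun _ => (1 : ℝ)) ω)) = s.indicator 1 := by
    ext ω
    by_cases hω : ω ∈ s <;> simp [hω]
  have heq := condLExp_ofReal m ((integrable_const (1 : ℝ)).indicator hs (μ := μ))
    (.of_forall (Set.indicator_nonneg fun _ _ => zero_le_one))
  rw [hcoe] at heq
  filter_upwards [hp, heq] with ω hω heqω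
  rw [heqω]
  exact ENNReal.ofReal_le_ofReal hω

theorem condLExp_ofReal_exp_le_one_add_tsum (hm : m ≤ m0) [IsFiniteMeasure μ] {X : Ω → ℝ}
    {p : ℕ → ℝ} {θ : ℝ} (hX : Measurable X) (hθ : 0 ≤ θ)
    (hp : ∀ j : ℕ, μ[Set.indicator {ω | (j : ℝ) ≤ X ω} (fun _ => (1 : ℝ)) | m] ≤ᵐ[μ]
      fun _ => p j) :
    μ⁻[fun ω => ENNReal.ofReal (Real.exp (θ * X ω)) | m] ≤ᵐ[μ]
      fun _ => 1 + ∑' j : ℕ, ENNReal.ofReal (Real.exp (θ * (j + 1))) * ENNReal.ofReal (p j) := by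
  let w (j : ℕ) : ℝ≥0∞ := ENNReal.ofReal (Real.exp (θ * (j + 1)))
  let I (j : ℕ) : Ω → ℝ≥0∞ := {ω | (j : ℝ) ≤ X ω}.indicator 1
  have hlevel (j : ℕ) : MeasurableSet {ω | (j : ℝ) ≤ X ω} := measurableSet_le measurable_const hX
  have hI (j : ℕ) : Measurable (I j) := measurable_one.indicator (hlevel j)
  have hpointwise : (fun ω => ENNReal.ofReal (Real.exp (θ * X ω))) ≤
      (fun _ => 1) + ∑' j, w j • I j := fun ω => by
    rw [Pi.add_apply, ENNReal.tsum_apply]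
    exact ofReal_exp_mul_le_one_add_tsum hθ (X ω)
  filter_upwards [condLExp_mono (mΩ := m) (P := μ) (.of_forall hpointwise),
    condLExp_add_left (mΩ := m) (P := μ) (∑' j, w j • I j) aemeasurable_const,
    condLExp_tsum m fun j => ((hI j).const_smul (w j)).aemeasurable,
    ae_all_iff.2 fun j => condLExp_smul (mΩ := m) (P := μ) (I j) (hI j).aemeasurable (w j),
    ae_all_iff.2 fun j => condLExp_indicator_one_le (hlevel j) (hp j)]
    with ω hmono hadd htsum hsmul hind
  calc μ⁻[fun ω => ENNReal.ofReal (Real.exp (θ * X ω)) | m] ω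
      ≤ 1 + ∑' j, w j * μ⁻[I j | m] ω := by
        refine hmono.trans_eq ?_
        rw [hadd, Pi.add_apply, condLExp_const hm, htsum, ENNReal.tsum_apply]
        simp only [hsmul, Pi.smul_apply, smul_eq_mul]
    _ ≤ 1 + ∑' j, w j * ENNReal.ofReal (p j) := by
        gcongr with j
        exact hind j

end ConditionalExpectation

section Adapted

variable {Ω : Type*} {m0 : MeasurableSpace Ω} {μ : Measure Ω} {ℱ : Filtration ℕ m0}
  [SigmaFiniteFiltration μ ℱ]

theorem lintegral_prod_le_pow_of_condLExp_le {f : ℕ → Ω → ℝ≥0∞} {K : ℝ≥0∞}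
    (hf : Adapted ℱ f) (hK : ∀ ℓ, μ⁻[f (ℓ + 1) | ℱ ℓ] ≤ᵐ[μ] fun _ => K) (n N : ℕ) :
    ∫⁻ ω, ∏ j ∈ Finset.range n, f (N + 1 + j) ω ∂μ ≤ K ^ n * μ Set.univ := by
  induction n with
  | zero => simp
  | succ n ih =>
    have hpast : Measurable[ℱ (N + n)] fun ω => ∏ j ∈ Finset.range n, f (N + 1 + j) ω := by
      refine Finset.measurable_fun_prod _ fun j hj => (hf _).mono (ℱ.mono ?_) le_rfl
      have := Finset.mem_range.1 hj
      omega
    calc ∫⁻ ω, ∏ j ∈ Finset.range (n + 1), f (N + 1 + j) ω ∂μ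
        = ∫⁻ ω, f (N + n + 1) ω * ∏ j ∈ Finset.range n, f (N + 1 + j) ω ∂μ := by
          simp only [Finset.prod_range_succ, mul_comm, add_right_comm N 1 n]
      _ ≤ K * ∫⁻ ω, ∏ j ∈ Finset.range n, f (N + 1 + j) ω ∂μ :=
          lintegral_mul_le_of_condLExp_le (ℱ.le _) ((hf _).mono (ℱ.le _) le_rfl) hpast (hK _)
      _ ≤ K * (K ^ n * μ Set.univ) := by gcongr
      _ = K ^ (n + 1) * μ Set.univ := by rw [pow_succ', mul_assoc]

theorem measure_le_sum_le_of_condLExp_exp_le {X : ℕ → Ω → ℝ} {K : ℝ≥0∞} {θ : ℝ}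
    (hX : Adapted ℱ X) (hθ : 0 ≤ θ)
    (hK : ∀ ℓ, μ⁻[fun ω => ENNReal.ofReal (Real.exp (θ * X (ℓ + 1) ω)) | ℱ ℓ] ≤ᵐ[μ] fun _ => K)
    (n N : ℕ) (b : ℝ) :
    μ {ω | b ≤ ∑ j ∈ Finset.range n, X (N + 1 + j) ω} ≤
      K ^ n * ENNReal.ofReal (Real.exp (-θ * b)) * μ Set.univ := by
  let f (ℓ : ℕ) (ω : Ω) : ℝ≥0∞ := ENNReal.ofReal (Real.exp (θ * X ℓ ω))
  have hf : Adapted ℱ f := fun ℓ => ((hX ℓ).const_mul θ).exp.ennreal_ofReal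
  have hprod (ω : Ω) : ENNReal.ofReal (Real.exp (θ * ∑ j ∈ Finset.range n, X (N + 1 + j) ω)) =
      ∏ j ∈ Finset.range n, f (N + 1 + j) ω := by
    rw [Finset.mul_sum, Real.exp_sum, ENNReal.ofReal_prod_of_nonneg fun _ _ => (Real.exp_pos _).le]
  have hmeas : Measurable fun ω => ∏ j ∈ Finset.range n, f (N + 1 + j) ω :=
    Finset.measurable_fun_prod _ fun j _ => (hf _).mono (ℱ.le _) le_rfl
  calc μ {ω | b ≤ ∑ j ∈ Finset.range n, X (N + 1 + j) ω}
      ≤ μ {ω | ENNReal.ofReal (Real.exp (θ * b)) ≤ ∏ j ∈ Finset.range n, f (N + 1 + j) ω} := by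
        refine measure_mono fun ω (hω : b ≤ _) => ?_
        rw [Set.mem_ofPred_eq, ← hprod]
        gcongr
    _ ≤ (∫⁻ ω, ∏ j ∈ Finset.range n, f (N + 1 + j) ω ∂μ) / ENNReal.ofReal (Real.exp (θ * b)) :=
        meas_ge_le_lintegral_div hmeas.aemeasurable
          (ENNReal.ofReal_pos.2 (Real.exp_pos _)).ne' ENNReal.ofReal_ne_top
    _ ≤ K ^ n * μ Set.univ / ENNReal.ofReal (Real.exp (θ * b)) := by
        gcongr
        exact lintegral_prod_le_pow_of_condLExp_le hf hK n N
    _ = K ^ n * ENNReal.ofReal (Real.exp (-θ * b)) * μ Set.univ := by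
        rw [div_eq_mul_inv, ← ENNReal.ofReal_inv_of_pos (Real.exp_pos _), ← Real.exp_neg, neg_mul,
          mul_right_comm]

end Adapted

theorem stmt15_general {c₀ c₁ : ℝ} (hc₀ : 0 < c₀) (hc₁ : 0 < c₁) :
    ∃ c₂ : ℝ, 1 < c₂ ∧
    ∀ {Ω : Type*} {m0 : MeasurableSpace Ω} (μ : Measure Ω) [IsFiniteMeasure μ]
      (ℱ : Filtration ℕ m0) (k : ℕ → Ω → ℝ),
    Adapted ℱ k →
    (∀ ℓ : ℕ, ∀ t : ℝ, 0 ≤ t →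
      μ[Set.indicator {ω | t ≤ k (ℓ + 1) ω} (fun _ => (1 : ℝ)) | ℱ ℓ] ≤ᵐ[μ]
        fun _ => c₀ * Real.exp (-c₀⁻¹ * Real.exp (c₁ * t))) →
    ∀ θ : ℝ, 1 ≤ θ →
      (∀ ℓ : ℕ, μ[fun ω => Real.exp (θ * k (ℓ + 1) ω) | ℱ ℓ] ≤ᵐ[μ]
          fun _ => c₂ * Real.exp (c₂ * θ * Real.log θ)) ∧
      (∀ n N : ℕ, ∀ b : ℝ,
        μ {ω | b ≤ ∑ j ∈ Finset.range n, k (N + 1 + j) ω} ≤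
          ENNReal.ofReal ((c₂ * Real.exp (c₂ * θ * Real.log θ)) ^ n * Real.exp (-θ * b)) *
            μ Set.univ) := by
  obtain ⟨c₂, hc₂, hseries⟩ := exists_one_add_tsum_exp_mul_doubleExpTail_le hc₀ hc₁
  refine ⟨c₂, hc₂, fun μ _ ℱ k hk htail θ hθ => ?_⟩
  set K := c₂ * Real.exp (c₂ * θ * Real.log θ)
  have hK : 0 ≤ K := by positivity
  have hθ₀ : 0 ≤ θ := by linarith
  have hmeas (ℓ : ℕ) : Measurable (k ℓ) := (hk ℓ).mono (ℱ.le ℓ) le_rfl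
  have hmoment (ℓ : ℕ) : μ⁻[fun ω => ENNReal.ofReal (Real.exp (θ * k (ℓ + 1) ω)) | ℱ ℓ] ≤ᵐ[μ]
      fun _ => ENNReal.ofReal K :=
    (condLExp_ofReal_exp_le_one_add_tsum (p := fun j => doubleExpTail c₀ c₁ j) (ℱ.le ℓ) (hmeas _)
      hθ₀ fun j => htail ℓ j j.cast_nonneg).trans (.of_forall fun _ => hseries θ hθ)
  refine ⟨fun ℓ => condExp_le_of_condLExp_ofReal_le (ℱ.le ℓ) ((hmeas _).const_mul θ).exp
    (.of_forall fun _ => (Real.exp_pos _).le) hK (hmoment ℓ), fun n N b => ?_⟩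
  rw [ENNReal.ofReal_mul (by positivity), ENNReal.ofReal_pow hK]
  exact measure_le_sum_le_of_condLExp_exp_le hk hθ₀ hmoment n N b

/-- Let `(k*_ℓ)_{ℓ ≥ 1}` be nonnegative random variables adapted to a filtration
`(ℱ_ℓ)` with `P[k*_ℓ ≥ t | ℱ_{ℓ−1}] ≤ c₀ exp(−c₀⁻¹ e^{c₁ t})` for all `t ≥ 0` and all
`ℓ`, where `c₀ > 1` and `c₁ > 0`.  Then there exists `c₂ > 1` depending only on `c₀`
and `c₁` such that for every `θ > 1`,
`E[e^{θ k*_ℓ} | ℱ_{ℓ−1}] ≤ c₂ e^{c₂ θ log θ}` almost surely, and consequently for all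
`n, N ∈ ℕ` and `b > 0`,
`P[Σ_{j=1}^{n} k*_{N+j} ≥ b] ≤ (c₂ e^{c₂ θ log θ})^n e^{−θ b}`. -/
theorem stmt15 (c₀ c₁ : ℝ) (hc₀ : 1 < c₀) (hc₁ : 0 < c₁) :
    ∃ c₂ : ℝ, 1 < c₂ ∧
    ∀ (Ω : Type) (m0 : MeasurableSpace Ω) (μ : Measure Ω), IsProbabilityMeasure μ →
    ∀ ℱ : Filtration ℕ m0, ∀ k : ℕ → Ω → ℝ,
    Adapted ℱ k → (∀ ℓ ω, 0 ≤ k ℓ ω) →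
    (∀ ℓ : ℕ, ∀ t : ℝ, 0 ≤ t →
      μ[Set.indicator {ω | t ≤ k (ℓ + 1) ω} (fun _ => (1 : ℝ)) | ℱ ℓ] ≤ᵐ[μ]
        fun _ => c₀ * Real.exp (-c₀⁻¹ * Real.exp (c₁ * t))) →
    ∀ θ : ℝ, 1 < θ →
      (∀ ℓ : ℕ, μ[fun ω => Real.exp (θ * k (ℓ + 1) ω) | ℱ ℓ] ≤ᵐ[μ]
          fun _ => c₂ * Real.exp (c₂ * θ * Real.log θ)) ∧
      (∀ n N : ℕ, ∀ b : ℝ, 0 < b →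
        μ {ω | b ≤ ∑ j ∈ Finset.range n, k (N + 1 + j) ω} ≤
          ENNReal.ofReal ((c₂ * Real.exp (c₂ * θ * Real.log θ)) ^ n * Real.exp (-θ * b))) := by
  obtain ⟨c₂, hc₂, h⟩ := stmt15_general (zero_lt_one.trans hc₀) hc₁
  exact ⟨c₂, hc₂, fun Ω m0 μ _ ℱ k hk _ htail θ hθ => ⟨(h μ ℱ k hk htail θ hθ.le).1,
    fun n N b _ => by simpa only [measure_univ, mul_one] using (h μ ℱ k hk htail θ hθ.le).2 n N b⟩⟩

end
end
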